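/- arXiv:2506.04189 — 2 statements merged into one kernel-verified Lean document; each statement's English description precedes it below -/
import Mathlib

section
/- Let c > 0 be a constant and let R ~ G(n, c/n). Then with high probability cn/4 ≤ e(R) ≤ cn and Y(R) ≤ 2c²n, where e(R) is the number of edges of R and Y(R) is the number of non-isolated edges of R. Moreover, for every constant δ > 0 satisfying 2e/δ < e^{cδ/2}, with high probability R is ⌈δn⌉-joined. -/
open SimpleGraph Filter
open scoped Classical

/-- The probability that the binomial random graph `G(n,p)` satisfies property `P`. -/
noncomputable def erProb (n : ℕ) (p : ℝ) (P : SimpleGraph (Fin n) → Prop) : ℝ :=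
  ∑ G : SimpleGraph (Fin n),
    if P G then p ^ G.edgeSet.ncard * (1 - p) ^ (n.choose 2 - G.edgeSet.ncard) else 0

/-- `Y(G)`: the number of non-isolated edges of `G`, i.e. edges sharing an endpoint with
some other edge. -/
noncomputable def numNonIsolatedEdges {V : Type*} (G : SimpleGraph V) : ℕ :=
  {e ∈ G.edgeSet | ∃ f ∈ G.edgeSet, f ≠ e ∧ ∃ v : V, v ∈ e ∧ v ∈ f}.ncard

/-- A graph is `k`-joined if between any two disjoint vertex sets of size `k`
there is an edge. -/
def KJoined {V : Type*} (G : SimpleGraph V) (k : ℕ) : Prop :=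
  ∀ A B : Finset V, A.card = k → B.card = k → Disjoint A B →
    ∃ a ∈ A, ∃ b ∈ B, G.Adj a b

/-! Every non-isolated edge lies in a cherry (a pair of edges with a common endpoint), so
`Y(R)` is at most twice the number of cherries. Both the number of edges and the number of
cherries are sums of indicators of events of the form `S ⊆ E(R)`, which are correlated
only for overlapping sets `S`; their means are asymptotically `cn/2` and `c²n/2` while their
variances are `O(n)`, so Chebyshev's inequality concentrates them around their means.

If `R` is not `k`-joined, some two disjoint `k`-sets have no edge of `R` between them. With
`k = ⌈δn⌉` and `binom(n, k) ≤ (e/δ)^k`, the union bound makes this at most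
`((e/δ)² e^{-δnp})^k`, a power of a number that stays below one. -/

open MeasureTheory ProbabilityTheory
open scoped Finset Topology unitInterval

section WithHighProbability

variable {α : Type*} {l : Filter α} {Ω : α → Type*} [∀ a, MeasurableSpace (Ω a)]
  {μ : ∀ a, Measure (Ω a)} {A B : ∀ a, Set (Ω a)}

/-- The events `A a` hold with high probability along the filter `l`, i.e. their probabilities
tend to one. The probability space may vary with `a`. -/
def WithHighProbability (l : Filter α) (μ : ∀ a, Measure (Ω a)) (A : ∀ a, Set (Ω a)) : Prop :=
  Tendsto (fun a ↦ (μ a).real (A a)) l (𝓝 1)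

variable [∀ a, IsProbabilityMeasure (μ a)]

lemma withHighProbability_of_measureReal_compl_le {f : α → ℝ} (hA : ∀ a, MeasurableSet (A a))
    (hf : Tendsto f l (𝓝 0)) (h : ∀ᶠ a in l, (μ a).real (A a)ᶜ ≤ f a) :
    WithHighProbability l μ A := by
  have hf' : Tendsto (fun a ↦ 1 - f a) l (𝓝 1) := by simpa using hf.const_sub 1
  refine tendsto_of_tendsto_of_tendsto_of_le_of_le' hf' tendsto_const_nhds ?_
    (.of_forall fun a ↦ measureReal_le_one)
  filter_upwards [h] with a ha
  rw [probReal_compl_eq_one_sub (hA a)] at ha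
  linarith

namespace WithHighProbability

lemma mono (hA : WithHighProbability l μ A) (hAB : ∀ᶠ a in l, A a ⊆ B a) :
    WithHighProbability l μ B :=
  tendsto_of_tendsto_of_tendsto_of_le_of_le' hA tendsto_const_nhds
    (hAB.mono fun _ h ↦ measureReal_mono h) (.of_forall fun _ ↦ measureReal_le_one)

lemma inter (hA : WithHighProbability l μ A) (hB : WithHighProbability l μ B)
    (hBm : ∀ a, MeasurableSet (B a)) :
    WithHighProbability l μ fun a ↦ A a ∩ B a := by
  have h : Tendsto (fun a ↦ (μ a).real (A a) + (μ a).real (B a) - 1) l (𝓝 1) := by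
    simpa using (Tendsto.add hA hB).sub_const 1
  refine tendsto_of_tendsto_of_tendsto_of_le_of_le h tendsto_const_nhds (fun a ↦ ?_)
    (fun a ↦ measureReal_le_one)
  have hunion : (μ a).real (A a ∪ B a) ≤ 1 := measureReal_le_one
  have hadd := measureReal_union_add_inter (μ := μ a) (s := A a) (hBm a)
  linarith

end WithHighProbability

lemma withHighProbability_abs_sub_integral_lt {X : ∀ a, Ω a → ℝ} {t : α → ℝ}
    (hXm : ∀ a, Measurable (X a)) (hX : ∀ a, MemLp (X a) 2 (μ a)) (ht : ∀ᶠ a in l, 0 < t a)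
    (hvar : Tendsto (fun a ↦ Var[X a; μ a] / t a ^ 2) l (𝓝 0)) :
    WithHighProbability l μ fun a ↦ {ω | |X a ω - (μ a)[X a]| < t a} := by
  refine withHighProbability_of_measureReal_compl_le
    (fun a ↦ measurableSet_lt (by fun_prop) (by fun_prop)) hvar ?_
  filter_upwards [ht] with a ha
  have hchebyshev := ENNReal.toReal_mono (by finiteness) (meas_ge_le_variance_div_sq (hX a) ha)
  rw [ENNReal.toReal_ofReal (div_nonneg (variance_nonneg _ _) (sq_nonneg _))] at hchebyshev
  simpa [Measure.real, Set.compl_ofPred] using hchebyshev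

lemma withHighProbability_abs_sub_mul_lt {X : ∀ a, Ω a → ℝ} {b : α → ℝ} {m ε : ℝ} (hε : 0 < ε)
    (hXm : ∀ a, Measurable (X a)) (hX : ∀ a, MemLp (X a) 2 (μ a)) (hb : ∀ᶠ a in l, 0 < b a)
    (hmean : Tendsto (fun a ↦ (μ a)[X a] / b a) l (𝓝 m))
    (hvar : Tendsto (fun a ↦ Var[X a; μ a] / b a ^ 2) l (𝓝 0)) :
    WithHighProbability l μ fun a ↦ {ω | |X a ω - m * b a| < ε * b a} := by
  have hvar' : Tendsto (fun a ↦ Var[X a; μ a] / (ε / 2 * b a) ^ 2) l (𝓝 0) := by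
    simpa only [mul_pow, mul_comm _ (b _ ^ 2), ← div_div, zero_div] using
      hvar.div_const ((ε / 2) ^ 2)
  refine (withHighProbability_abs_sub_integral_lt hXm hX
    (hb.mono fun a ha ↦ by positivity) hvar').mono ?_
  filter_upwards [hb, Metric.tendsto_nhds.mp hmean (ε / 2) (by positivity)] with a ha hdist ω hω
  have hcenter : |(μ a)[X a] - m * b a| < ε / 2 * b a := by
    rwa [Real.dist_eq, div_sub' ha.ne', abs_div, abs_of_pos ha, div_lt_iff₀ ha,
      mul_comm (b a)] at hdist
  have htriangle := abs_sub_le (X a ω) ((μ a)[X a]) (m * b a)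
  simp only [Set.mem_ofPred_eq] at hω ⊢
  linarith

end WithHighProbability

section EventCount

variable {Ω ι : Type*}

lemma card_filter_mem_eq_sum_indicator (s : Finset ι) (A : ι → Set Ω) (ω : Ω) :
    (#{i ∈ s | ω ∈ A i} : ℝ) = ∑ i ∈ s, (A i).indicator 1 ω := by
  simp [Set.indicator_apply]

variable [MeasurableSpace Ω] {μ : Measure Ω} {s : Finset ι} {A : ι → Set Ω}

lemma memLp_indicator_one [IsFiniteMeasure μ] {B : Set Ω} (hB : MeasurableSet B) (q : ENNReal) :
    MemLp (B.indicator (1 : Ω → ℝ)) q μ :=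
  (memLp_const (1 : ℝ)).indicator hB

lemma integral_card_filter_mem [IsFiniteMeasure μ] (hA : ∀ i ∈ s, MeasurableSet (A i)) :
    ∫ ω, (#{i ∈ s | ω ∈ A i} : ℝ) ∂μ = ∑ i ∈ s, μ.real (A i) := by
  simp_rw [card_filter_mem_eq_sum_indicator]
  rw [integral_finsetSum _ fun i hi ↦ (memLp_indicator_one (hA i hi) 1).integrable le_rfl]
  exact Finset.sum_congr rfl fun i hi ↦ integral_indicator_one (hA i hi)

variable [IsProbabilityMeasure μ]

lemma covariance_indicator_one {B C : Set Ω} (hB : MeasurableSet B) (hC : MeasurableSet C) :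
    cov[B.indicator (1 : Ω → ℝ), C.indicator 1; μ] = μ.real (B ∩ C) - μ.real B * μ.real C := by
  rw [covariance_eq_sub (memLp_indicator_one hB 2) (memLp_indicator_one hC 2),
    ← Set.inter_indicator_one, integral_indicator_one hB, integral_indicator_one hC,
    integral_indicator_one (hB.inter hC)]

lemma variance_card_filter_mem_le (hA : ∀ i ∈ s, MeasurableSet (A i)) {r : ι → ι → Prop}
    [∀ i, DecidablePred (r i)]
    (hr : ∀ i ∈ s, ∀ j ∈ s, ¬ r i j → μ.real (A i ∩ A j) ≤ μ.real (A i) * μ.real (A j)) :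
    Var[fun ω ↦ (#{i ∈ s | ω ∈ A i} : ℝ); μ] ≤
      ∑ i ∈ s, ∑ j ∈ s with r i j, μ.real (A i ∩ A j) := by
  simp_rw [card_filter_mem_eq_sum_indicator]
  rw [variance_fun_sum' fun i hi ↦ memLp_indicator_one (hA i hi) 2]
  refine Finset.sum_le_sum fun i hi ↦ ?_
  rw [Finset.sum_filter]
  refine Finset.sum_le_sum fun j hj ↦ ?_
  rw [covariance_indicator_one (hA i hi) (hA j hj)]
  split_ifs with hij
  · exact sub_le_self _ (by positivity)
  · exact sub_nonpos.mpr (hr i hi j hj hij)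

end EventCount

section RandomSubset

variable {ι : Type*} {u : Set ι} {s : Finset ι}

lemma setBernoulli_real_superset (p : I) (hs : ↑s ⊆ u) :
    setBer(u, p).real {t | ↑s ⊆ t} = (p : ℝ) ^ #s := by
  have hpre : (fun P : ι → Prop ↦ {i | P i}) ⁻¹' {t | ↑s ⊆ t} =
      Set.pi s fun _ ↦ {True} := by
    ext P
    simp [Set.subset_def, Set.mem_pi]
  rw [measureReal_def, setBernoulli_apply', hpre, Measure.infinitePi_pi _ (by simp)]
  rw [Finset.prod_congr rfl fun i hi ↦ show _ = (unitInterval.toNNReal p : ENNReal) by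
    simp [hs hi]]
  simp

lemma setBernoulli_real_disjoint (p : I) (hs : ↑s ⊆ u) :
    setBer(u, p).real {t | Disjoint ↑s t} = (1 - p : ℝ) ^ #s := by
  have hpre : (fun P : ι → Prop ↦ {i | P i}) ⁻¹' {t | Disjoint ↑s t} =
      Set.pi s fun _ ↦ {False} := by
    ext P
    simp [Set.disjoint_left, Set.mem_pi]
  rw [measureReal_def, setBernoulli_apply', hpre, Measure.infinitePi_pi _ (by simp)]
  rw [Finset.prod_congr rfl fun i hi ↦ show _ = (unitInterval.toNNReal (σ p) : ENNReal) by
    simp [hs hi]]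
  simp

end RandomSubset

section RandomGraph

instance {V : Type*} [Countable V] : MeasurableSingletonClass (SimpleGraph V) where
  measurableSet_singleton G := by
    rw [← measurableEmbedding_edgeSet.measurableSet_image, Set.image_singleton]
    exact measurableSet_singleton _

variable {V : Type*} [Finite V]

lemma erProb_eq_binomialRandom_real {n : ℕ} (p : I) (P : SimpleGraph (Fin n) → Prop) :
    erProb n p P = G(Fin n, p).real {G | P G} := by
  rw [← Finset.coe_filter_univ, ← sum_measureReal_singleton, Finset.sum_filter]
  simp [erProb, measureReal_def]

lemma map_edgeSet_binomialRandom {V : Type*} [Countable V] (p : I) :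
    G(V, p).map edgeSet = setBer(Sym2.diagSetᶜ, p) := by
  rw [binomialRandom, measurableEmbedding_edgeSet.map_comap, Measure.restrict_eq_self_of_ae_mem]
  filter_upwards [setBernoulli_ae_subset] with t ht
  exact ⟨fromEdgeSet t, by simpa [Set.subset_compl_iff_disjoint_right] using ht⟩

lemma binomialRandom_real_subset_edgeSet (p : I) {s : Finset (Sym2 V)}
    (hs : ↑s ⊆ (⊤ : SimpleGraph V).edgeSet) :
    G(V, p).real {G | ↑s ⊆ G.edgeSet} = (p : ℝ) ^ #s := by
  rw [edgeSet_top] at hs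
  rw [← setBernoulli_real_superset p hs, ← map_edgeSet_binomialRandom,
    map_measureReal_apply measurable_edgeSet .of_discrete, Set.preimage_ofPred_eq]

lemma binomialRandom_real_disjoint_edgeSet (p : I) {s : Finset (Sym2 V)}
    (hs : ↑s ⊆ (⊤ : SimpleGraph V).edgeSet) :
    G(V, p).real {G | Disjoint ↑s G.edgeSet} = (1 - p : ℝ) ^ #s := by
  rw [edgeSet_top] at hs
  rw [← setBernoulli_real_disjoint p hs, ← map_edgeSet_binomialRandom,
    map_measureReal_apply measurable_edgeSet .of_discrete, Set.preimage_ofPred_eq]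

end RandomGraph

section ContainedCount

variable {V ι : Type*} [Finite V] {s : Finset ι} {S : ι → Finset (Sym2 V)}

/-- The number of indices `i ∈ s` for which all the edges in `S i` are present in `G`. -/
noncomputable def containedCount (s : Finset ι) (S : ι → Finset (Sym2 V)) (G : SimpleGraph V) : ℕ :=
  #{i ∈ s | ↑(S i) ⊆ G.edgeSet}

lemma integral_containedCount (p : I) (hS : ∀ i ∈ s, ↑(S i) ⊆ (⊤ : SimpleGraph V).edgeSet) :
    ∫ G, (containedCount s S G : ℝ) ∂G(V, p) = ∑ i ∈ s, (p : ℝ) ^ #(S i) :=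
  (integral_card_filter_mem fun _ _ ↦ .of_discrete).trans <|
    Finset.sum_congr rfl fun i hi ↦ binomialRandom_real_subset_edgeSet p (hS i hi)

/-- Only pairs of edge sets that overlap can be positively correlated. -/
lemma variance_containedCount_le (p : I)
    (hS : ∀ i ∈ s, ↑(S i) ⊆ (⊤ : SimpleGraph V).edgeSet) :
    Var[fun G ↦ (containedCount s S G : ℝ); G(V, p)] ≤
      ∑ i ∈ s, ∑ j ∈ s with ¬ Disjoint (S i) (S j), (p : ℝ) ^ #(S i ∪ S j) := by
  have hinter : ∀ i ∈ s, ∀ j ∈ s,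
      G(V, p).real ({G | ↑(S i) ⊆ G.edgeSet} ∩ {G | ↑(S j) ⊆ G.edgeSet}) =
        (p : ℝ) ^ #(S i ∪ S j) := fun i hi j hj ↦ by
    have hunion : ↑(S i ∪ S j) ⊆ (⊤ : SimpleGraph V).edgeSet := by
      simpa only [Finset.coe_union] using Set.union_subset (hS i hi) (hS j hj)
    rw [← binomialRandom_real_subset_edgeSet p hunion]
    simp [Set.ofPred_and]
  have hdisjoint : ∀ i ∈ s, ∀ j ∈ s, ¬ ¬ Disjoint (S i) (S j) →
      G(V, p).real ({G | ↑(S i) ⊆ G.edgeSet} ∩ {G | ↑(S j) ⊆ G.edgeSet}) ≤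
        G(V, p).real {G | ↑(S i) ⊆ G.edgeSet} * G(V, p).real {G | ↑(S j) ⊆ G.edgeSet} :=
    fun i hi j hj hij ↦ by
      rw [hinter i hi j hj, Finset.card_union_of_disjoint (not_not.mp hij), pow_add,
        binomialRandom_real_subset_edgeSet p (hS i hi),
        binomialRandom_real_subset_edgeSet p (hS j hj)]
  refine (variance_card_filter_mem_le (fun _ _ ↦ .of_discrete) hdisjoint).trans_eq ?_
  exact Finset.sum_congr rfl fun i hi ↦ Finset.sum_congr rfl fun j hj ↦
    hinter i hi j (Finset.mem_filter.mp hj).1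

end ContainedCount

section Edges

variable {V : Type*} [Fintype V]

lemma containedCount_singleton_eq_ncard_edgeSet (G : SimpleGraph V) :
    containedCount (⊤ : SimpleGraph V).edgeFinset ({·}) G = G.edgeSet.ncard := by
  rw [containedCount, ← Set.ncard_coe_finset]
  congr 1
  ext e
  simpa using G.not_isDiag_of_mem_edgeSet

lemma integral_ncard_edgeSet (p : I) :
    ∫ G, (G.edgeSet.ncard : ℝ) ∂G(V, p) = (Fintype.card V).choose 2 * p := by
  simp_rw [← containedCount_singleton_eq_ncard_edgeSet]
  rw [integral_containedCount p (by simp)]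
  simp only [Finset.card_singleton, pow_one, Finset.sum_const, nsmul_eq_mul,
    card_edgeFinset_top_eq_card_choose_two]

lemma variance_ncard_edgeSet_le (p : I) :
    Var[fun G ↦ (G.edgeSet.ncard : ℝ); G(V, p)] ≤ (Fintype.card V).choose 2 * p := by
  simp_rw [← containedCount_singleton_eq_ncard_edgeSet]
  refine (variance_containedCount_le p (by simp)).trans_eq ?_
  rw [← card_edgeFinset_top_eq_card_choose_two, ← nsmul_eq_mul, ← Finset.sum_const]
  refine Finset.sum_congr rfl fun e he ↦ ?_
  simp only [Finset.disjoint_singleton, not_not]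
  rw [Finset.filter_eq, if_pos he]
  simp

end Edges

section Cherries

variable {V : Type*} [Fintype V]

/-- The cherries of `G`: the sets consisting of two edges of `G` with a common endpoint. -/
noncomputable def cherries (G : SimpleGraph V) : Finset (Finset (Sym2 V)) :=
  Finset.univ.biUnion fun v ↦ (G.incidenceFinset v).powersetCard 2

lemma mem_cherries {G : SimpleGraph V} {S : Finset (Sym2 V)} :
    S ∈ cherries G ↔ #S = 2 ∧ ↑S ⊆ G.edgeSet ∧ ∃ v, ∀ e ∈ S, v ∈ e := by
  simp only [cherries, Finset.mem_biUnion, Finset.mem_univ, true_and, Finset.mem_powersetCard,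
    Finset.subset_iff, mem_incidenceFinset, incidenceSet, Set.mem_ofPred_eq, Set.subset_def,
    Finset.mem_coe]
  constructor
  · rintro ⟨v, hS, hcard⟩
    exact ⟨hcard, fun e he ↦ (hS he).1, v, fun e he ↦ (hS he).2⟩
  · rintro ⟨hcard, hSG, v, hv⟩
    exact ⟨v, fun e he ↦ ⟨hSG e he, hv e he⟩, hcard⟩

lemma containedCount_cherries_top (G : SimpleGraph V) :
    containedCount (cherries ⊤) id G = #(cherries G) := by
  rw [containedCount]
  congr 1
  ext S
  have hGtop : G.edgeSet ⊆ (⊤ : SimpleGraph V).edgeSet := edgeSet_mono le_top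
  simp only [Finset.mem_filter, mem_cherries, id]
  exact ⟨fun ⟨⟨hcard, _, hv⟩, hSG⟩ ↦ ⟨hcard, hSG, hv⟩,
    fun ⟨hcard, hSG, hv⟩ ↦ ⟨⟨hcard, hSG.trans hGtop, hv⟩, hSG⟩⟩

lemma numNonIsolatedEdges_le_two_mul_card_cherries (G : SimpleGraph V) :
    numNonIsolatedEdges G ≤ 2 * #(cherries G) := by
  have hcover : {e ∈ G.edgeSet | ∃ f ∈ G.edgeSet, f ≠ e ∧ ∃ v : V, v ∈ e ∧ v ∈ f} ⊆
      ((cherries G).biUnion id : Finset (Sym2 V)) := by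
    rintro e ⟨he, f, hf, hfe, v, hve, hvf⟩
    simp only [Finset.coe_biUnion, Set.mem_iUnion]
    refine ⟨{e, f}, mem_cherries.mpr ⟨Finset.card_pair hfe.symm, ?_, v, ?_⟩, by simp⟩
    · simp [Set.insert_subset_iff, he, hf]
    · simp [hve, hvf]
  calc numNonIsolatedEdges G
      ≤ #((cherries G).biUnion id) := by
        rw [← Set.ncard_coe_finset]
        exact Set.ncard_le_ncard hcover
    _ ≤ #(cherries G) * 2 :=
        Finset.card_biUnion_le_card_mul _ _ _ fun S hS ↦ (mem_cherries.mp hS).1.le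
    _ = 2 * #(cherries G) := mul_comm _ _

lemma card_cherries (G : SimpleGraph V) : #(cherries G) = ∑ v, (G.degree v).choose 2 := by
  rw [cherries, Finset.card_biUnion]
  · simp only [Finset.card_powersetCard, card_incidenceFinset_eq_degree]
  · intro v _ w _ hvw
    refine Finset.disjoint_left.mpr fun S hSv hSw ↦ ?_
    obtain ⟨hSv, hcard⟩ := Finset.mem_powersetCard.mp hSv
    obtain ⟨hSw, -⟩ := Finset.mem_powersetCard.mp hSw
    have hS : S ⊆ {s(v, w)} := fun e he ↦ Finset.mem_singleton.mpr <|
      (Sym2.mem_and_mem_iff hvw).mp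
        ⟨((mem_incidenceFinset _ _ _).mp (hSv he)).2, ((mem_incidenceFinset _ _ _).mp (hSw he)).2⟩
    simpa [hcard] using Finset.card_le_card hS

lemma card_cherries_top :
    #(cherries (⊤ : SimpleGraph V)) = Fintype.card V * (Fintype.card V - 1).choose 2 := by
  rw [card_cherries]
  refine Finset.sum_const_nat fun v _ ↦ ?_
  rw [← complete_graph_degree v]
  congr!

lemma card_filter_mem_cherries_le (G : SimpleGraph V) (e : Sym2 V) :
    #{S ∈ cherries G | e ∈ S} ≤ 2 * Fintype.card V := by
  have hcover : {S ∈ cherries G | e ∈ S} ⊆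
      (e.toFinset.biUnion fun v ↦ G.incidenceFinset v).image fun f ↦ {e, f} := by
    intro S hS
    obtain ⟨hS, heS⟩ := Finset.mem_filter.mp hS
    obtain ⟨hcard, hSG, v, hv⟩ := mem_cherries.mp hS
    obtain ⟨f, rfl⟩ : ∃ f, S = {e, f} := by
      obtain ⟨a, b, -, rfl⟩ := Finset.card_eq_two.mp hcard
      rcases (by simpa using heS : e = a ∨ e = b) with rfl | rfl
      exacts [⟨b, rfl⟩, ⟨a, Finset.pair_comm a e⟩]
    refine Finset.mem_image.mpr ⟨f, Finset.mem_biUnion.mpr ⟨v, ?_, ?_⟩, rfl⟩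
    · simpa using hv e heS
    · simpa [incidenceSet] using ⟨hSG (by simp), hv f (by simp)⟩
  calc #{S ∈ cherries G | e ∈ S}
      ≤ #(e.toFinset.biUnion fun v ↦ G.incidenceFinset v) :=
        (Finset.card_le_card hcover).trans Finset.card_image_le
    _ ≤ #e.toFinset * Fintype.card V :=
        Finset.card_biUnion_le_card_mul _ _ _ fun v _ ↦ by
          rw [card_incidenceFinset_eq_degree]
          exact (G.degree_lt_card_verts v).le
    _ ≤ 2 * Fintype.card V := by
        gcongr
        rw [Sym2.card_toFinset]
        split_ifs <;> simp

lemma card_filter_not_disjoint_cherries_le {G : SimpleGraph V} {S : Finset (Sym2 V)}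
    (hS : S ∈ cherries G) :
    #{T ∈ cherries G | ¬ Disjoint S T} ≤ 4 * Fintype.card V := by
  have hcover : {T ∈ cherries G | ¬ Disjoint S T} ⊆
      S.biUnion fun e ↦ {T ∈ cherries G | e ∈ T} := by
    intro T hT
    obtain ⟨hT, hST⟩ := Finset.mem_filter.mp hT
    obtain ⟨e, heS, heT⟩ := Finset.not_disjoint_iff.mp hST
    exact Finset.mem_biUnion.mpr ⟨e, heS, Finset.mem_filter.mpr ⟨hT, heT⟩⟩
  calc #{T ∈ cherries G | ¬ Disjoint S T}
      ≤ #S * (2 * Fintype.card V) := (Finset.card_le_card hcover).trans <|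
        Finset.card_biUnion_le_card_mul _ _ _ fun e _ ↦ card_filter_mem_cherries_le G e
    _ = 4 * Fintype.card V := by
      rw [(mem_cherries.mp hS).1]
      ring

lemma three_le_card_union_of_mem_cherries {G : SimpleGraph V} {S T : Finset (Sym2 V)}
    (hS : S ∈ cherries G) (hT : T ∈ cherries G) (hST : S ≠ T) : 3 ≤ #(S ∪ T) := by
  obtain ⟨hS, -⟩ := mem_cherries.mp hS
  obtain ⟨hT, -⟩ := mem_cherries.mp hT
  have hTS : ¬ T ⊆ S := fun h ↦ hST (Finset.eq_of_subset_of_card_le h (by lia)).symm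
  have hlt : #S < #(S ∪ T) := Finset.card_lt_card <|
    Finset.subset_union_left.ssubset_of_ne fun h ↦ hTS (Finset.left_eq_union.mp h)
  lia

lemma integral_card_cherries (p : I) :
    ∫ G : SimpleGraph V, (#(cherries G) : ℝ) ∂G(V, p) =
      Fintype.card V * (Fintype.card V - 1).choose 2 * (p : ℝ) ^ 2 := by
  simp_rw [← containedCount_cherries_top]
  rw [integral_containedCount (S := id) p fun S hS ↦ (mem_cherries.mp hS).2.1,
    ← Nat.cast_mul, ← card_cherries_top, ← nsmul_eq_mul]
  exact Finset.sum_eq_card_nsmul fun S hS ↦ by rw [id, (mem_cherries.mp hS).1]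

lemma variance_card_cherries_le (p : I) :
    Var[fun G : SimpleGraph V ↦ (#(cherries G) : ℝ); G(V, p)] ≤
      Fintype.card V * (Fintype.card V - 1).choose 2 *
        ((p : ℝ) ^ 2 + 4 * Fintype.card V * (p : ℝ) ^ 3) := by
  have hpair : ∀ S ∈ cherries (⊤ : SimpleGraph V),
      ∑ T ∈ cherries ⊤ with ¬ Disjoint S T, (p : ℝ) ^ #(S ∪ T) ≤
        (p : ℝ) ^ 2 + 4 * Fintype.card V * (p : ℝ) ^ 3 := fun S hS ↦
    calc ∑ T ∈ cherries ⊤ with ¬ Disjoint S T, (p : ℝ) ^ #(S ∪ T)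
        ≤ ∑ T ∈ cherries ⊤ with ¬ Disjoint S T,
            ((if T = S then (p : ℝ) ^ 2 else 0) + (p : ℝ) ^ 3) := by
          refine Finset.sum_le_sum fun T hT ↦ ?_
          split_ifs with hTS
          · subst hTS
            rw [Finset.union_self, (mem_cherries.mp hS).1]
            exact le_add_of_nonneg_right (pow_nonneg p.2.1 3)
          · rw [zero_add]
            exact pow_le_pow_of_le_one p.2.1 p.2.2 <| three_le_card_union_of_mem_cherries hS
              (Finset.mem_filter.mp hT).1 (Ne.symm hTS)
      _ ≤ (p : ℝ) ^ 2 + 4 * Fintype.card V * (p : ℝ) ^ 3 := by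
          rw [Finset.sum_add_distrib, Finset.sum_const, nsmul_eq_mul]
          gcongr
          · rw [Finset.sum_ite_eq']
            split_ifs
            exacts [le_rfl, sq_nonneg _]
          · exact pow_nonneg p.2.1 3
          · exact_mod_cast card_filter_not_disjoint_cherries_le hS
  simp_rw [← containedCount_cherries_top]
  refine (variance_containedCount_le (S := id) p fun S hS ↦
    (mem_cherries.mp hS).2.1).trans ?_
  refine (Finset.sum_le_card_nsmul _ _ _ hpair).trans_eq ?_
  rw [nsmul_eq_mul, card_cherries_top, Nat.cast_mul]

end Cherries

section Joined

variable {V : Type*} {A B : Finset V}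

/-- The pairs with one endpoint in `A` and one endpoint in `B`. -/
noncomputable def crossPairs (A B : Finset V) : Finset (Sym2 V) :=
  Finset.image₂ (s(·, ·)) A B

lemma coe_crossPairs_subset_edgeSet_top (h : Disjoint A B) :
    ↑(crossPairs A B) ⊆ (⊤ : SimpleGraph V).edgeSet := by
  intro e he
  obtain ⟨a, ha, b, hb, rfl⟩ := Finset.mem_image₂.mp he
  exact Finset.disjoint_iff_ne.mp h a ha b hb

lemma card_crossPairs (h : Disjoint A B) : #(crossPairs A B) = #A * #B := by
  rw [crossPairs, Finset.card_image₂_iff]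
  rintro ⟨a, b⟩ ⟨ha, -⟩ ⟨a', b'⟩ ⟨-, hb'⟩ hab
  rcases Sym2.eq_iff.mp hab with ⟨haa', hbb'⟩ | ⟨hab', -⟩
  · exact Prod.ext haa' hbb'
  · exact (Finset.disjoint_iff_ne.mp h a ha b' hb' hab').elim

lemma disjoint_crossPairs_edgeSet_iff {G : SimpleGraph V} :
    Disjoint ↑(crossPairs A B) G.edgeSet ↔ ¬ ∃ a ∈ A, ∃ b ∈ B, G.Adj a b := by
  simp only [crossPairs, Set.disjoint_left, Finset.mem_coe, Finset.forall_mem_image₂, mem_edgeSet,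
    not_exists, not_and]

variable [Fintype V]

lemma binomialRandom_real_compl_kJoined_le (p : I) (k : ℕ) :
    G(V, p).real {G | KJoined G k}ᶜ ≤
      ((Fintype.card V).choose k : ℝ) ^ 2 * (1 - p : ℝ) ^ (k * k) := by
  let pairs : Finset (Finset V × Finset V) :=
    {x ∈ Finset.univ.powersetCard k ×ˢ Finset.univ.powersetCard k | Disjoint x.1 x.2}
  have hcover : {G : SimpleGraph V | KJoined G k}ᶜ ⊆
      ⋃ x ∈ pairs, {G | Disjoint ↑(crossPairs x.1 x.2) G.edgeSet} := by
    intro G hG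
    simp only [KJoined, Set.mem_compl_iff, Set.mem_ofPred_eq, not_forall] at hG
    obtain ⟨A, B, hA, hB, hAB, hG⟩ := hG
    exact Set.mem_biUnion (x := (A, B)) (by simp [pairs, hA, hB, hAB])
      (disjoint_crossPairs_edgeSet_iff.mpr hG)
  have hprob : ∀ x ∈ pairs, G(V, p).real {G | Disjoint ↑(crossPairs x.1 x.2) G.edgeSet} =
      (1 - p : ℝ) ^ (k * k) := fun x hx ↦ by
    simp only [pairs, Finset.mem_filter, Finset.mem_product, Finset.mem_powersetCard_univ] at hx
    rw [binomialRandom_real_disjoint_edgeSet p (coe_crossPairs_subset_edgeSet_top hx.2),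
      card_crossPairs hx.2, hx.1.1, hx.1.2]
  have hcard : #pairs ≤ (Fintype.card V).choose k ^ 2 :=
    (Finset.card_filter_le _ _).trans_eq <| by
      rw [Finset.card_product, Finset.card_powersetCard, Finset.card_univ, sq]
  calc G(V, p).real {G | KJoined G k}ᶜ
      ≤ ∑ x ∈ pairs, G(V, p).real {G | Disjoint ↑(crossPairs x.1 x.2) G.edgeSet} :=
        (measureReal_mono hcover (measure_ne_top _ _)).trans (measureReal_biUnion_finset_le _ _)
    _ = #pairs * (1 - p : ℝ) ^ (k * k) := by
        rw [Finset.sum_congr rfl hprob, Finset.sum_const, nsmul_eq_mul]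
    _ ≤ ((Fintype.card V).choose k : ℝ) ^ 2 * (1 - p : ℝ) ^ (k * k) := by
        have : 0 ≤ 1 - (p : ℝ) := sub_nonneg.mpr p.2.2
        gcongr
        exact_mod_cast hcard

lemma choose_le_exp_one_div_pow {n k : ℕ} {δ : ℝ} (hδ : 0 < δ) (hk : δ * n ≤ k) :
    (n.choose k : ℝ) ≤ (Real.exp 1 / δ) ^ k :=
  calc (n.choose k : ℝ)
      ≤ (n : ℝ) ^ k / k.factorial := Nat.choose_le_pow_div k n
    _ ≤ (k / δ) ^ k / k.factorial := by
        gcongr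
        rwa [le_div_iff₀' hδ]
    _ = (k : ℝ) ^ k / k.factorial / δ ^ k := by rw [div_pow, div_right_comm]
    _ ≤ Real.exp k / δ ^ k := by
        gcongr
        exact Real.pow_div_factorial_le_exp k k.cast_nonneg k
    _ = (Real.exp 1 / δ) ^ k := by rw [div_pow, ← Real.exp_nat_mul, mul_one]

lemma choose_sq_mul_one_sub_pow_le {n k : ℕ} {δ : ℝ} (p : I) (hδ : 0 < δ) (hk : δ * n ≤ k) :
    (n.choose k : ℝ) ^ 2 * (1 - p : ℝ) ^ (k * k) ≤
      ((Real.exp 1 / δ) ^ 2 * Real.exp (-(δ * (n * p)))) ^ k := by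
  have hp₀ : 0 ≤ (p : ℝ) := p.2.1
  have hp₁ : 0 ≤ 1 - (p : ℝ) := sub_nonneg.mpr p.2.2
  have hpow : (1 - p : ℝ) ^ k ≤ Real.exp (-(δ * (n * p))) :=
    calc (1 - p : ℝ) ^ k ≤ Real.exp (-p) ^ k := by
          gcongr
          exact Real.one_sub_le_exp_neg p
      _ = Real.exp (-(k * p)) := by rw [← Real.exp_nat_mul, mul_neg]
      _ ≤ Real.exp (-(δ * (n * p))) := by
          rw [← mul_assoc]
          gcongr
  calc (n.choose k : ℝ) ^ 2 * (1 - p : ℝ) ^ (k * k)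
      = (n.choose k : ℝ) ^ 2 * ((1 - p : ℝ) ^ k) ^ k := by rw [pow_mul]
    _ ≤ ((Real.exp 1 / δ) ^ k) ^ 2 * Real.exp (-(δ * (n * p))) ^ k := by
        gcongr
        exact choose_le_exp_one_div_pow hδ hk
    _ = ((Real.exp 1 / δ) ^ 2 * Real.exp (-(δ * (n * p)))) ^ k := by
        rw [mul_pow, pow_right_comm]

end Joined

section SparseRegime

variable {c ε δ : ℝ}

lemma tendsto_zero_of_tendsto_natCast_mul {p : ℕ → ℝ}
    (hp : Tendsto (fun n ↦ n * p n) atTop (𝓝 c)) : Tendsto p atTop (𝓝 0) := by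
  refine (hp.div_atTop tendsto_natCast_atTop_atTop).congr' ?_
  filter_upwards [eventually_ne_atTop 0] with n hn
  exact mul_div_cancel_left₀ _ (Nat.cast_ne_zero.mpr hn)

lemma tendsto_choose_two_mul_div {p : ℕ → ℝ} (hp : Tendsto (fun n ↦ n * p n) atTop (𝓝 c)) :
    Tendsto (fun n ↦ n.choose 2 * p n / n) atTop (𝓝 (c / 2)) := by
  have hlim : Tendsto (fun n ↦ (n * p n - p n) / 2) atTop (𝓝 ((c - 0) / 2)) :=
    (hp.sub (tendsto_zero_of_tendsto_natCast_mul hp)).div_const 2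
  rw [sub_zero] at hlim
  refine hlim.congr' ?_
  filter_upwards [eventually_ne_atTop 0] with n hn
  rw [Nat.cast_choose_two]
  field_simp

lemma tendsto_mul_choose_two_mul_sq_div {p : ℕ → ℝ}
    (hp : Tendsto (fun n ↦ n * p n) atTop (𝓝 c)) :
    Tendsto (fun n ↦ n * (n - 1).choose 2 * p n ^ 2 / n) atTop (𝓝 (c ^ 2 / 2)) := by
  have hp0 := tendsto_zero_of_tendsto_natCast_mul hp
  have hlim : Tendsto (fun n ↦ (n * p n - p n) * (n * p n - 2 * p n) / 2) atTop
      (𝓝 ((c - 0) * (c - 2 * 0) / 2)) :=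
    ((hp.sub hp0).mul (hp.sub (hp0.const_mul 2))).div_const 2
  rw [mul_zero, sub_zero, ← sq] at hlim
  refine hlim.congr' ?_
  filter_upwards [eventually_ge_atTop 1] with n hn
  rw [Nat.cast_choose_two, Nat.cast_sub hn]
  field_simp
  push_cast
  ring

variable {p : ℕ → I}

lemma withHighProbability_abs_ncard_edgeSet_sub_lt (hε : 0 < ε)
    (hp : Tendsto (fun n ↦ n * (p n : ℝ)) atTop (𝓝 c)) :
    WithHighProbability atTop (fun n ↦ G(Fin n, p n))
      fun n ↦ {G | |(G.edgeSet.ncard : ℝ) - c / 2 * n| < ε * n} := by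
  have hmean := tendsto_choose_two_mul_div hp
  refine withHighProbability_abs_sub_mul_lt hε (fun n ↦ .of_discrete) (fun n ↦ .of_discrete)
    ((eventually_gt_atTop 0).mono fun n hn ↦ Nat.cast_pos.mpr hn) ?_ ?_
  · simpa only [integral_ncard_edgeSet, Fintype.card_fin] using hmean
  · refine squeeze_zero (fun n ↦ div_nonneg (variance_nonneg _ _) (sq_nonneg _)) (fun n ↦ ?_)
      (hmean.div_atTop tendsto_natCast_atTop_atTop)
    rw [div_div, ← sq]
    gcongr
    simpa only [Fintype.card_fin] using variance_ncard_edgeSet_le (V := Fin n) (p n)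

lemma withHighProbability_abs_card_cherries_sub_lt (hε : 0 < ε)
    (hp : Tendsto (fun n ↦ n * (p n : ℝ)) atTop (𝓝 c)) :
    WithHighProbability atTop (fun n ↦ G(Fin n, p n))
      fun n ↦ {G | |(#(cherries G) : ℝ) - c ^ 2 / 2 * n| < ε * n} := by
  have hmean := tendsto_mul_choose_two_mul_sq_div hp
  have hvar : Tendsto (fun n ↦ n * (n - 1).choose 2 * (p n : ℝ) ^ 2 / n *
      (1 + 4 * (n * p n)) / n) atTop (𝓝 0) :=
    (hmean.mul ((hp.const_mul 4).const_add 1)).div_atTop tendsto_natCast_atTop_atTop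
  refine withHighProbability_abs_sub_mul_lt hε (fun n ↦ .of_discrete) (fun n ↦ .of_discrete)
    ((eventually_gt_atTop 0).mono fun n hn ↦ Nat.cast_pos.mpr hn) ?_ ?_
  · simpa only [integral_card_cherries, Fintype.card_fin] using hmean
  · refine squeeze_zero (fun n ↦ div_nonneg (variance_nonneg _ _) (sq_nonneg _)) (fun n ↦ ?_) hvar
    rw [div_mul_eq_mul_div, div_div, ← sq]
    gcongr
    refine (variance_card_cherries_le (V := Fin n) (p n)).trans_eq ?_
    rw [Fintype.card_fin]
    ring

lemma withHighProbability_numNonIsolatedEdges_lt (hε : 0 < ε)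
    (hp : Tendsto (fun n ↦ n * (p n : ℝ)) atTop (𝓝 c)) :
    WithHighProbability atTop (fun n ↦ G(Fin n, p n))
      fun n ↦ {G | (numNonIsolatedEdges G : ℝ) < (c ^ 2 + ε) * n} := by
  refine (withHighProbability_abs_card_cherries_sub_lt (half_pos hε) hp).mono
    (.of_forall fun n G hG ↦ ?_)
  have hY : (numNonIsolatedEdges G : ℝ) ≤ 2 * #(cherries G) :=
    mod_cast numNonIsolatedEdges_le_two_mul_card_cherries G
  simp only [Set.mem_ofPred_eq, abs_lt] at hG ⊢
  linarith

lemma withHighProbability_kJoined (hp : Tendsto (fun n ↦ n * (p n : ℝ)) atTop (𝓝 c))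
    (hδ : 0 < δ) (h : Real.exp 1 / δ < Real.exp (c * δ / 2)) :
    WithHighProbability atTop (fun n ↦ G(Fin n, p n)) fun n ↦ {G | KJoined G ⌈δ * n⌉₊} := by
  have hlim : Tendsto (fun n ↦ (Real.exp 1 / δ) ^ 2 * Real.exp (-(δ * (n * p n)))) atTop
      (𝓝 ((Real.exp 1 / δ) ^ 2 * Real.exp (-(δ * c)))) :=
    ((Real.continuous_exp.tendsto _).comp (hp.const_mul δ).neg).const_mul _
  have hlt : (Real.exp 1 / δ) ^ 2 * Real.exp (-(δ * c)) < 1 := by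
    rw [Real.exp_neg, ← div_eq_mul_inv, div_lt_one (Real.exp_pos _)]
    calc (Real.exp 1 / δ) ^ 2 < Real.exp (c * δ / 2) ^ 2 := by gcongr
      _ = Real.exp (δ * c) := by
        rw [← Real.exp_nat_mul]
        congr 1
        push_cast
        ring
  obtain ⟨r, hr, hr1⟩ := exists_between hlt
  have hr0 : 0 ≤ r := le_trans (by positivity) hr.le
  have hpow : Tendsto (fun n : ℕ ↦ r ^ ⌈δ * n⌉₊) atTop (𝓝 0) :=
    (tendsto_pow_atTop_nhds_zero_of_lt_one hr0 hr1).comp <|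
      tendsto_nat_ceil_atTop.comp <| tendsto_natCast_atTop_atTop.const_mul_atTop hδ
  refine withHighProbability_of_measureReal_compl_le (fun n ↦ .of_discrete) hpow ?_
  filter_upwards [hlim.eventually_le_const hr] with n hn
  calc G(Fin n, p n).real {G | KJoined G ⌈δ * n⌉₊}ᶜ
      ≤ (n.choose ⌈δ * n⌉₊ : ℝ) ^ 2 * (1 - p n : ℝ) ^ (⌈δ * n⌉₊ * ⌈δ * n⌉₊) := by
        simpa only [Fintype.card_fin] using
          binomialRandom_real_compl_kJoined_le (V := Fin n) (p n) ⌈δ * n⌉₊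
    _ ≤ ((Real.exp 1 / δ) ^ 2 * Real.exp (-(δ * (n * p n)))) ^ ⌈δ * n⌉₊ :=
        choose_sq_mul_one_sub_pow_le (p n) hδ (Nat.le_ceil _)
    _ ≤ r ^ ⌈δ * n⌉₊ := by gcongr

lemma exists_unitInterval_eventually_eq {p : ℕ → ℝ} (hc : 0 < c)
    (hp : Tendsto (fun n ↦ n * p n) atTop (𝓝 c)) : ∃ q : ℕ → I, ∀ᶠ n in atTop, (q n : ℝ) = p n := by
  refine ⟨fun n ↦ Set.projIcc 0 1 zero_le_one (p n), ?_⟩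
  filter_upwards [hp.eventually_const_lt hc,
    (tendsto_zero_of_tendsto_natCast_mul hp).eventually_le_const one_pos] with n hpos hle
  have hp0 : 0 < p n := pos_of_mul_pos_right hpos n.cast_nonneg
  rw [Set.projIcc_of_mem zero_le_one ⟨hp0.le, hle⟩]

end SparseRegime

theorem stmt_8_general (c : ℝ) (hc : 0 < c) (p : ℕ → ℝ)
    (hp : Tendsto (fun n : ℕ ↦ n * p n) atTop (𝓝 c)) :
    Tendsto
      (fun n ↦ erProb n (p n) (fun R ↦
        c * n / 4 ≤ (R.edgeSet.ncard : ℝ) ∧ (R.edgeSet.ncard : ℝ) ≤ c * n ∧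
          ((numNonIsolatedEdges R : ℝ) ≤ 2 * c ^ 2 * n)))
      atTop (𝓝 1) ∧
    ∀ δ : ℝ, 0 < δ → Real.exp 1 / δ < Real.exp (c * δ / 2) →
      Tendsto (fun n ↦ erProb n (p n) (fun R ↦ KJoined R ⌈δ * n⌉₊)) atTop (𝓝 1) := by
  obtain ⟨q, hqp⟩ := exists_unitInterval_eventually_eq hc hp
  have hq : Tendsto (fun n ↦ n * (q n : ℝ)) atTop (𝓝 c) :=
    hp.congr' (hqp.mono fun n hn ↦ by simp only [hn])
  have htransfer {P : ∀ n, SimpleGraph (Fin n) → Prop}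
      (hP : WithHighProbability atTop (fun n ↦ G(Fin n, q n)) fun n ↦ {G | P n G}) :
      Tendsto (fun n ↦ erProb n (p n) (P n)) atTop (𝓝 1) :=
    hP.congr' (hqp.mono fun n hn ↦ by
      beta_reduce
      rw [← hn, erProb_eq_binomialRandom_real])
  refine ⟨htransfer ?_, fun δ hδ h ↦ htransfer (withHighProbability_kJoined hq hδ h)⟩
  refine ((withHighProbability_abs_ncard_edgeSet_sub_lt (ε := c / 4) (by positivity) hq).inter
    (withHighProbability_numNonIsolatedEdges_lt (ε := c ^ 2) (by positivity) hq)
    fun n ↦ .of_discrete).mono (.of_forall fun n G ⟨hedges, hY⟩ ↦ ?_)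
  simp only [Set.mem_ofPred_eq, abs_lt] at hedges hY ⊢
  exact ⟨by linarith, by linarith, by linarith⟩

/-- For a constant `c > 0` and `R ~ G(n, c/n)`: with high probability
`cn/4 ≤ e(R) ≤ cn` and `Y(R) ≤ 2c²n`; moreover, for every constant `δ > 0` with
`2e/δ < e^{cδ/2}`, with high probability `R` is `⌈δn⌉`-joined. -/
theorem stmt_8 (c : ℝ) (hc : 0 < c) :
    Tendsto
      (fun n => erProb n (c / n) (fun R =>
        c * n / 4 ≤ (R.edgeSet.ncard : ℝ) ∧ (R.edgeSet.ncard : ℝ) ≤ c * n ∧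
          ((numNonIsolatedEdges R : ℝ) ≤ 2 * c ^ 2 * n)))
      atTop (nhds 1) ∧
    ∀ δ : ℝ, 0 < δ → 2 * Real.exp 1 / δ < Real.exp (c * δ / 2) →
      Tendsto
        (fun n => erProb n (c / n) (fun R => KJoined R ⌈δ * n⌉₊))
        atTop (nhds 1) := by
  have hp : Tendsto (fun n : ℕ ↦ n * (c / n)) atTop (𝓝 c) :=
    tendsto_const_nhds.congr' <| (eventually_ne_atTop 0).mono fun n hn ↦
      (mul_div_cancel₀ c (Nat.cast_ne_zero.mpr hn)).symm
  obtain ⟨hsparse, hjoined⟩ := stmt_8_general c hc _ hp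
  refine ⟨hsparse, fun δ hδ h ↦ hjoined δ hδ (lt_of_le_of_lt ?_ h)⟩
  gcongr
  linarith [Real.exp_pos 1]
end

section
/- Let r ≥ 2 be an integer, let n be sufficiently large, let b be an integer with 1 ≤ b ≤ 2^{-10} r^{-2} n, and set α = (r+1)/(2r). Let G be a graph on n vertices with minimum degree δ(G) ≥ αn and let χ be an r-colouring of E(G). If every Hamilton cycle of G has colour bias at most b, then there exists a set U ⊆ V(G) with |U| ≥ (r+1)n/(2r) and a colour c* ∈ {1,…,r} such that every matching in the induced subgraph G[U] containing no edge of colour c* has fewer than 2^9 r b edges. -/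
open SimpleGraph
open scoped Classical

/-- `M` is a matching in `G`: a set of pairwise vertex-disjoint edges of `G`. -/
def MatchingIn {V : Type*} (M : Finset (Sym2 V)) (G : SimpleGraph V) : Prop :=
  (∀ e ∈ M, e ∈ G.edgeSet) ∧
  ∀ e ∈ M, ∀ f ∈ M, e ≠ f → ∀ v : V, ¬(v ∈ e ∧ v ∈ f)

/-!
Moving a vertex `v` of a Hamilton cycle from between `x` and `y` to between consecutive vertices
`a` and `b` trades the edges `xv`, `vy`, `ab` for `xy`, `av`, `vb`; call such a move an active
switch if it changes the colour statistics. Given a family of vertex-disjoint active switches, a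
Pósa-type exchange argument yields a Hamilton cycle containing all their removed edges, and any
subfamily may then be performed. Performing for each colour `c` exactly the switches that favour
`c` produces `r` Hamilton cycles whose numbers of edges of the favoured colour add up to at least
`n` plus one per switch. Since no colour ever exceeds `n / r + b`, there are at most `r * b`
disjoint active switches, and the vertices of a maximal such family form a set `S` of at most
`5 * r * b` vertices that meets every active switch.

Off `S` the colouring is therefore rigid: no switch that avoids `S` changes the colour statistics.
Comparing two edges in the neighbourhood of one vertex, and then passing to the neighbourhood of a
suitable neighbour, one finds a vertex `u` such that all edges in the neighbourhood of `u` that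
avoid `S` have a common colour. In `U = N(u)` every edge of another colour then meets `S`, so a
matching of such edges has at most `|S|` elements.
-/

variable {V : Type*}

/-! ### Paths and tours as edge multisets -/

lemma exists_eq_append_of_not_isChain {R : V → V → Prop} {l : List V} (h : ¬l.IsChain R) :
    ∃ p q a b, l = p ++ q ∧ a ∈ p.getLast? ∧ b ∈ q.head? ∧ ¬R a b := by
  obtain ⟨i, hi, hR⟩ := List.exists_not_getElem_of_not_isChain h
  exact ⟨l.take (i + 1), l.drop (i + 1), l[i], l[i + 1], (List.take_append_drop _ _).symm,
    by simp [List.getLast?_take, show i < l.length by omega], by simp [hi], hR⟩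

/-- The edges of the path that visits the vertices of `l` in order, with multiplicity. -/
def pathEdges (l : List V) : Multiset (Sym2 V) :=
  l.zipWith (s(·, ·)) l.tail

@[simp] lemma pathEdges_nil : pathEdges ([] : List V) = 0 := rfl

@[simp] lemma pathEdges_singleton (a : V) : pathEdges [a] = 0 := rfl

@[simp] lemma pathEdges_cons_cons (a b : V) (l : List V) :
    pathEdges (a :: b :: l) = s(a, b) ::ₘ pathEdges (b :: l) := rfl

lemma card_pathEdges (l : List V) : (pathEdges l).card = l.length - 1 := by
  simp [pathEdges]

lemma pathEdges_cons {a b : V} {l : List V} (hb : b ∈ l.head?) :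
    pathEdges (a :: l) = s(a, b) ::ₘ pathEdges l := by
  cases l <;> simp_all

lemma pathEdges_append {a b : V} {p q : List V} (ha : a ∈ p.getLast?) (hb : b ∈ q.head?) :
    pathEdges (p ++ q) = s(a, b) ::ₘ (pathEdges p + pathEdges q) := by
  induction p with
  | nil => simp at ha
  | cons c p ih =>
    cases p with
    | nil => simp_all [pathEdges_cons hb]
    | cons d p => simp_all [Multiset.cons_swap]

lemma pathEdges_add_le (p q : List V) : pathEdges p + pathEdges q ≤ pathEdges (p ++ q) := by
  rcases hp : p.getLast? with - | a
  · simp_all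
  rcases hq : q.head? with - | b
  · simp_all
  · exact pathEdges_append hp hq ▸ Multiset.le_cons_self _ _

lemma pathEdges_reverse (l : List V) : pathEdges l.reverse = pathEdges l := by
  induction l with
  | nil => rfl
  | cons a l ih =>
    rcases hl : l.head? with - | b
    · simp_all
    · rw [List.reverse_cons, pathEdges_append (by simpa using hl) rfl, pathEdges_cons hl, ih,
        pathEdges_singleton, add_zero, Sym2.eq_swap]

lemma forall_mem_pathEdges {P : Sym2 V → Prop} {l : List V} :
    (∀ e ∈ pathEdges l, P e) ↔ l.IsChain fun a b => P s(a, b) := by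
  induction l with
  | nil => simp
  | cons a l ih => cases l <;> simp_all

lemma exists_eq_append_of_mem_pathEdges {e : Sym2 V} {l : List V} (he : e ∈ pathEdges l) :
    ∃ p q a b, l = p ++ q ∧ a ∈ p.getLast? ∧ b ∈ q.head? ∧ e = s(a, b) := by
  have hchain : ¬l.IsChain fun a b => e ≠ s(a, b) := fun h =>
    forall_mem_pathEdges (P := (e ≠ ·)).2 h e he rfl
  simpa only [ne_eq, not_not] using exists_eq_append_of_not_isChain hchain

lemma mem_of_mem_pathEdges {e : Sym2 V} {l : List V} {v : V} (he : e ∈ pathEdges l)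
    (hv : v ∈ e) : v ∈ l := by
  obtain ⟨p, q, a, b, rfl, ha, hb, rfl⟩ := exists_eq_append_of_mem_pathEdges he
  rcases Sym2.mem_iff.1 hv with rfl | rfl
  · exact List.mem_append_left _ (List.mem_of_getLast? ha)
  · exact List.mem_append_right _ (List.mem_of_head? hb)

lemma nodup_pathEdges {l : List V} (hl : l.Nodup) : (pathEdges l).Nodup := by
  induction l with
  | nil => simp
  | cons a l ih =>
    cases l with
    | nil => simp
    | cons b l =>
      rw [pathEdges_cons_cons, Multiset.nodup_cons]
      exact ⟨fun h => hl.notMem (mem_of_mem_pathEdges h (Sym2.mem_mk_left a b)), ih hl.of_cons⟩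

/-- The edges of the closed walk that visits the vertices of `l` in order and then returns to the
first one. A single vertex contributes a loop, so there are always `l.length` of them. -/
def cycleEdges (l : List V) : Multiset (Sym2 V) :=
  pathEdges (l ++ l.head?.toList)

lemma cycleEdges_eq {a b : V} {l : List V} (ha : a ∈ l.head?) (hb : b ∈ l.getLast?) :
    cycleEdges l = s(b, a) ::ₘ pathEdges l := by
  rw [cycleEdges, Option.mem_def.1 ha, pathEdges_append hb (b := a) rfl]
  simp

lemma card_cycleEdges (l : List V) : (cycleEdges l).card = l.length := by
  cases l <;> simp [cycleEdges, card_pathEdges]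

lemma pathEdges_le_cycleEdges (l : List V) : pathEdges l ≤ cycleEdges l :=
  (Multiset.le_add_right _ _).trans (pathEdges_add_le l _)

lemma cycleEdges_append {a b c d : V} {p q : List V} (ha : a ∈ p.head?) (hb : b ∈ p.getLast?)
    (hc : c ∈ q.head?) (hd : d ∈ q.getLast?) :
    cycleEdges (p ++ q) = s(d, a) ::ₘ s(b, c) ::ₘ (pathEdges p + pathEdges q) := by
  rw [cycleEdges_eq (a := a) (b := d) (by simp_all [List.head?_append])
    (by simp_all [List.getLast?_append]), pathEdges_append hb hc]

lemma cycleEdges_append_comm (p q : List V) : cycleEdges (p ++ q) = cycleEdges (q ++ p) := by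
  rcases eq_or_ne p [] with rfl | hp
  · simp
  rcases eq_or_ne q [] with rfl | hq
  · simp
  have hp₁ := List.head?_eq_some_head hp
  have hp₂ := List.getLast?_eq_some_getLast hp
  have hq₁ := List.head?_eq_some_head hq
  have hq₂ := List.getLast?_eq_some_getLast hq
  rw [cycleEdges_append hp₁ hp₂ hq₁ hq₂, cycleEdges_append hq₁ hq₂ hp₁ hp₂, Multiset.cons_swap,
    add_comm]

/-- `l` lists every vertex exactly once. -/
def IsOrdering (l : List V) : Prop := l.Nodup ∧ ∀ v, v ∈ l

lemma IsOrdering.perm {l l' : List V} (h : IsOrdering l) (hp : l.Perm l') : IsOrdering l' :=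
  ⟨hp.nodup_iff.1 h.1, fun v => hp.mem_iff.1 (h.2 v)⟩

lemma IsOrdering.length_eq [Fintype V] {l : List V} (h : IsOrdering l) :
    l.length = Fintype.card V := by
  have huniv : l.toFinset = Finset.univ :=
    Finset.eq_univ_iff_forall.2 fun v => List.mem_toFinset.2 (h.2 v)
  rw [← List.toFinset_card_of_nodup h.1, huniv, Finset.card_univ]

/-- `E` is the edge multiset of a Hamilton cycle of the complete graph on `V`; on one or two
vertices this is a loop or a doubled edge. -/
def IsTour (E : Multiset (Sym2 V)) : Prop := ∃ l, IsOrdering l ∧ cycleEdges l = E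

lemma IsTour.card_eq [Fintype V] {E : Multiset (Sym2 V)} (h : IsTour E) :
    E.card = Fintype.card V := by
  obtain ⟨l, hl, rfl⟩ := h
  rw [card_cycleEdges, hl.length_eq]

lemma IsOrdering.exists_rotation {l : List V} (hl : IsOrdering l) {e : Sym2 V}
    (he : e ∈ cycleEdges l) :
    ∃ l' a b, IsOrdering l' ∧ cycleEdges l' = cycleEdges l ∧ a ∈ l'.head? ∧ b ∈ l'.getLast? ∧
      e = s(b, a) := by
  have hne : l ≠ [] := by rintro rfl; simp [cycleEdges] at he
  have ha := List.head?_eq_some_head hne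
  have hb := List.getLast?_eq_some_getLast hne
  rcases Multiset.mem_cons.1 (cycleEdges_eq ha hb ▸ he) with rfl | he
  · exact ⟨l, _, _, hl, rfl, ha, hb, rfl⟩
  · obtain ⟨p, q, c, d, rfl, hc, hd, rfl⟩ := exists_eq_append_of_mem_pathEdges he
    exact ⟨q ++ p, d, c, hl.perm List.perm_append_comm, cycleEdges_append_comm q p,
      by simp_all [List.head?_append], by simp_all [List.getLast?_append], rfl⟩

lemma IsTour.exists_path {E : Multiset (Sym2 V)} (hE : IsTour E) {x y : V} (h : s(x, y) ∈ E) :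
    ∃ l, IsOrdering l ∧ x ∈ l.getLast? ∧ y ∈ l.head? ∧ E = s(x, y) ::ₘ pathEdges l := by
  obtain ⟨l₀, hl₀, rfl⟩ := hE
  obtain ⟨l, a, b, hl, hcycle, ha, hb, hab⟩ := hl₀.exists_rotation h
  rw [← hcycle]
  rcases Sym2.eq_iff.1 hab with ⟨rfl, rfl⟩ | ⟨rfl, rfl⟩
  · exact ⟨l, hl, hb, ha, cycleEdges_eq ha hb⟩
  · exact ⟨l.reverse, hl.perm l.reverse_perm.symm, by simpa, by simpa,
      by rw [cycleEdges_eq ha hb, pathEdges_reverse, Sym2.eq_swap]⟩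

lemma IsOrdering.isTour_two_opt {x y c d : V} {p q : List V} (h : IsOrdering (p ++ q))
    (hx : x ∈ q.getLast?) (hy : y ∈ p.head?) (hc : c ∈ p.getLast?) (hd : d ∈ q.head?) :
    IsTour (s(x, c) ::ₘ s(y, d) ::ₘ (pathEdges p + pathEdges q)) :=
  ⟨p.reverse ++ q, h.perm (p.reverse_perm.symm.append_right q), by
    rw [cycleEdges_append (by simpa) (by simpa) hd hx, pathEdges_reverse]⟩

lemma IsOrdering.isTour_insert {v a b : V} {p q : List V} {x y : V}
    (hl : IsOrdering (v :: (p ++ q))) (hy : y ∈ p.head?) (ha : a ∈ p.getLast?)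
    (hb : b ∈ q.head?) (hx : x ∈ q.getLast?) :
    IsTour (s(x, y) ::ₘ s(a, v) ::ₘ s(v, b) ::ₘ (pathEdges p + pathEdges q)) := by
  refine ⟨v :: (q ++ p), hl.perm (List.perm_append_comm.cons v), ?_⟩
  rw [cycleEdges_eq (a := v) (b := a) rfl
      (by rw [← List.cons_append, List.getLast?_append, Option.mem_def.1 ha]; rfl),
    pathEdges_cons (b := b) (by simp_all [List.head?_append]), pathEdges_append hx hy,
    add_comm (pathEdges q), Multiset.cons_swap _ s(x, y), Multiset.cons_swap _ s(x, y)]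

lemma IsTour.exists_path_of_consecutive {R : Multiset (Sym2 V)} {v x y : V} (hvx : v ≠ x)
    (h : IsTour (s(x, v) ::ₘ s(v, y) ::ₘ R)) :
    ∃ l, IsOrdering (v :: l) ∧ y ∈ l.head? ∧ x ∈ l.getLast? ∧ R = pathEdges l := by
  obtain ⟨l, hl, hx, hv, hE⟩ := h.exists_path (Multiset.mem_cons_self _ _)
  obtain ⟨l, rfl⟩ := List.head?_eq_some_iff.1 hv
  obtain ⟨z, hz⟩ : ∃ z, z ∈ l.head? := by
    cases l <;> simp_all
  have hxl : x ∈ l.getLast? := by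
    cases l <;> simp_all
  rw [pathEdges_cons hz, Multiset.cons_inj_right] at hE
  obtain rfl : y = z := by
    have hmem : s(v, y) ∈ s(v, z) ::ₘ pathEdges l := hE ▸ Multiset.mem_cons_self _ _
    rcases Multiset.mem_cons.1 hmem with heq | hmem
    · exact Sym2.congr_right.1 heq
    · exact absurd (mem_of_mem_pathEdges hmem (Sym2.mem_mk_left v y)) hl.1.notMem
  exact ⟨l, hl, hz, hxl, (Multiset.cons_inj_right _).1 hE⟩

lemma IsTour.relocate {R : Multiset (Sym2 V)} {v x y a b : V} (hvx : v ≠ x)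
    (h : IsTour (R + {s(x, v), s(v, y), s(a, b)})) :
    IsTour (R + {s(x, y), s(a, v), s(v, b)}) := by
  obtain ⟨l, hl, hy, hx, hE⟩ := IsTour.exists_path_of_consecutive (R := s(a, b) ::ₘ R) hvx <| by
    simpa only [Multiset.insert_eq_cons, ← Multiset.singleton_add, add_comm, add_left_comm] using h
  obtain ⟨p, q, c, d, rfl, hc, hd, hcd⟩ :=
    exists_eq_append_of_mem_pathEdges (hE ▸ Multiset.mem_cons_self s(a, b) R)
  have hyp : y ∈ p.head? := by
    cases p <;> simp_all
  have hxq : x ∈ q.getLast? := by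
    obtain ⟨q, rfl⟩ := List.head?_eq_some_iff.1 hd
    simpa [List.getLast?_append] using hx
  have hR : R = pathEdges p + pathEdges q := by
    rwa [pathEdges_append hc hd, hcd, Multiset.cons_inj_right] at hE
  have hab : ({s(a, v), s(v, b)} : Multiset (Sym2 V)) = {s(c, v), s(v, d)} := by
    rcases Sym2.eq_iff.1 hcd with ⟨rfl, rfl⟩ | ⟨rfl, rfl⟩
    · rfl
    · rw [Multiset.pair_comm, Sym2.eq_swap, Sym2.eq_swap (a := a)]
  simpa only [hR, hab, Multiset.insert_eq_cons, ← Multiset.singleton_add, add_assoc,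
    add_comm, add_left_comm] using hl.isTour_insert hyp hc hd hxq

/-! ### Closing up a tour inside the graph -/

lemma countP_dropLast_add_countP_tail_le {P Q : V → Prop} {R : Sym2 V → Prop} [DecidablePred R]
    {l : List V} (h : l.IsChain fun c d => P c → Q d → R s(c, d)) :
    l.dropLast.countP (P ·) + l.tail.countP (Q ·) ≤
      (l.length - 1) + (pathEdges l).countP R := by
  induction l with
  | nil => simp
  | cons a l ih =>
    cases l with
    | nil => simp
    | cons b l =>
      obtain ⟨hab, hl⟩ := List.isChain_cons_cons.1 h
      have ih := ih hl
      simp only [List.dropLast_cons_cons, List.tail_cons, List.countP_cons, pathEdges_cons_cons,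
        Multiset.countP_cons, List.length_cons, decide_eq_true_eq] at ih ⊢
      split_ifs <;> first | omega | tauto

lemma IsOrdering.countP_adj [Fintype V] {G : SimpleGraph V} {l : List V} (hl : IsOrdering l)
    (v : V) : l.countP (G.Adj v ·) = G.degree v := by
  rw [List.countP_eq_length_filter, ← List.toFinset_card_of_nodup (hl.1.filter _),
    ← G.card_neighborFinset_eq_degree]
  congr 1
  ext w
  simp [hl.2 w]

lemma IsOrdering.exists_adj_adj [Fintype V] {G : SimpleGraph V} {l : List V} {x y : V}
    (hl : IsOrdering l) (hx : x ∈ l.getLast?) (hy : y ∈ l.head?) {F : Multiset (Sym2 V)}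
    (hdeg : Fintype.card V + F.card ≤ G.degree x + G.degree y) :
    ∃ p q c d, l = p ++ q ∧ c ∈ p.getLast? ∧ d ∈ q.head? ∧ G.Adj x c ∧ G.Adj y d ∧
      s(c, d) ∉ F := by
  have hchain : ¬l.IsChain fun c d => G.Adj x c → G.Adj y d → s(c, d) ∈ F := by
    intro h
    have hcount := countP_dropLast_add_countP_tail_le (R := (· ∈ F)) h
    have hF : (pathEdges l).countP (· ∈ F) ≤ F.card := by
      rw [Multiset.countP_eq_card_filter]
      exact Multiset.card_le_card <|
        (Multiset.le_iff_subset ((nodup_pathEdges hl.1).filter _)).2 fun e he =>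
          (Multiset.mem_filter.1 he).2
    have hdegx : l.dropLast.countP (G.Adj x ·) = G.degree x := by
      obtain ⟨l', rfl⟩ := List.getLast?_eq_some_iff.1 hx
      simp [← hl.countP_adj x]
    have hdegy : l.tail.countP (G.Adj y ·) = G.degree y := by
      obtain ⟨l', rfl⟩ := List.head?_eq_some_iff.1 hy
      simp [← hl.countP_adj y]
    have hpos : 0 < l.length := List.length_pos_of_mem (hl.2 x)
    have hlen := hl.length_eq
    omega
  simpa using exists_eq_append_of_not_isChain hchain

lemma IsTour.exists_fewer_nonedges [Fintype V] {G : SimpleGraph V} {E F : Multiset (Sym2 V)}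
    (hE : IsTour E) (hFE : F ≤ E) (hFG : ∀ e ∈ F, e ∈ G.edgeSet)
    (hdeg : Fintype.card V + F.card ≤ 2 * G.minDegree) (hnot : ∃ e ∈ E, e ∉ G.edgeSet) :
    ∃ E', IsTour E' ∧ F ≤ E' ∧ E'.countP (· ∉ G.edgeSet) < E.countP (· ∉ G.edgeSet) := by
  obtain ⟨e, he, hxy⟩ := hnot
  induction e with | _ x y
  obtain ⟨l, hl, hx, hy, rfl⟩ := hE.exists_path he
  obtain ⟨p, q, c, d, rfl, hc, hd, hxc, hyd, hcd⟩ := hl.exists_adj_adj hx hy (G := G) (F := F)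
    (by have := G.minDegree_le_degree x; have := G.minDegree_le_degree y; omega)
  have hxq : x ∈ q.getLast? := by
    obtain ⟨q, rfl⟩ := List.head?_eq_some_iff.1 hd
    simpa [List.getLast?_append] using hx
  have hyp : y ∈ p.head? := by
    cases p <;> simp_all
  refine ⟨_, hl.isTour_two_opt hxq hyp hc hd, ?_, ?_⟩
  · rw [pathEdges_append hc hd, Multiset.le_cons_of_notMem fun h => hxy (hFG _ h),
      Multiset.le_cons_of_notMem hcd] at hFE
    exact (hFE.trans (Multiset.le_cons_self _ _)).trans (Multiset.le_cons_self _ _)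
  · rw [mem_edgeSet] at hxy
    simp only [pathEdges_append hc hd, Multiset.countP_cons, mem_edgeSet, hxc, hyd, hxy,
      not_true_eq_false, not_false_eq_true, if_true, if_false]
    omega

theorem IsTour.exists_forall_mem_edgeSet [Fintype V] {G : SimpleGraph V}
    {E F : Multiset (Sym2 V)} (hE : IsTour E) (hFE : F ≤ E) (hFG : ∀ e ∈ F, e ∈ G.edgeSet)
    (hdeg : Fintype.card V + F.card ≤ 2 * G.minDegree) :
    ∃ E', IsTour E' ∧ F ≤ E' ∧ ∀ e ∈ E', e ∈ G.edgeSet := by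
  induction hk : E.countP (· ∉ G.edgeSet) using Nat.strong_induction_on generalizing E with
  | _ k ih =>
    by_cases hnot : ∃ e ∈ E, e ∉ G.edgeSet
    · obtain ⟨E', hE', hFE', hlt⟩ := hE.exists_fewer_nonedges hFE hFG hdeg hnot
      exact ih _ (hk ▸ hlt) hE' hFE' rfl
    · exact ⟨E, hE, hFE, by simpa using hnot⟩

/-! ### Switches -/

lemma card_lt_sum_max_count {C : Type*} [Fintype C] {A B : Multiset C} (hcard : A.card = B.card)
    (hne : A ≠ B) : A.card < ∑ c, max (A.count c) (B.count c) := by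
  have hA : ∑ c, A.count c = A.card := Multiset.sum_count_eq_card (by simp)
  obtain ⟨c, hc⟩ : ∃ c, A.count c < B.count c := by
    by_contra! hle
    exact hne (Multiset.eq_of_le_of_card_le (Multiset.le_iff_count.2 hle) hcard.le).symm
  rw [← hA]
  exact Finset.sum_lt_sum (fun c _ => le_max_left _ _) ⟨c, Finset.mem_univ c, lt_max_of_lt_right hc⟩

/-- The local change of a Hamilton cycle that moves the vertex `v` from between its neighbours `x`
and `y` to between two other consecutive vertices `a` and `b`. -/
structure Switch (V : Type*) where
  (v x y a b : V)

namespace Switch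

variable {C : Type*} (g : Switch V)

/-- The edges that leave the cycle when the switch is performed. -/
def removed : Multiset (Sym2 V) := {s(g.x, g.v), s(g.v, g.y), s(g.a, g.b)}

/-- The edges that enter the cycle when the switch is performed. -/
def added : Multiset (Sym2 V) := {s(g.x, g.y), s(g.a, g.v), s(g.v, g.b)}

/-- The vertices of a switch, in an order that makes the removed edges edges of a path. -/
def verts : List V := [g.x, g.v, g.y, g.a, g.b]

/-- A switch on five distinct vertices of `G` that uses only edges of `G` and changes the colour
statistics of the cycle. -/
structure IsActive (G : SimpleGraph V) (χ : Sym2 V → C) : Prop where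
  nodup : g.verts.Nodup
  removed_subset : ∀ e ∈ g.removed, e ∈ G.edgeSet
  added_subset : ∀ e ∈ g.added, e ∈ G.edgeSet
  map_ne : g.removed.map χ ≠ g.added.map χ

/-- The side of the switch on which colour `c` occurs more often. -/
noncomputable def better (χ : Sym2 V → C) (c : C) : Multiset (Sym2 V) :=
  if (g.removed.map χ).count c < (g.added.map χ).count c then g.added else g.removed

@[simp] lemma card_removed : g.removed.card = 3 := rfl

@[simp] lemma card_added : g.added.card = 3 := rfl

lemma better_eq_or (χ : Sym2 V → C) (c : C) :
    g.better χ c = g.removed ∨ g.better χ c = g.added := by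
  unfold better
  split_ifs <;> simp

variable {g}

lemma IsActive.v_ne_x {G : SimpleGraph V} {χ : Sym2 V → C} (h : g.IsActive G χ) : g.v ≠ g.x := by
  have := h.nodup
  simp_all [verts, eq_comm]

lemma count_map_better (χ : Sym2 V → C) (c : C) :
    ((g.better χ c).map χ).count c =
      max ((g.removed.map χ).count c) ((g.added.map χ).count c) := by
  unfold better
  split_ifs with h
  exacts [(max_eq_right h.le).symm, (max_eq_left (not_lt.1 h)).symm]

lemma removed_le_pathEdges_verts : g.removed ≤ pathEdges g.verts := by
  simp only [verts, pathEdges_cons_cons, pathEdges_singleton]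
  exact Multiset.cons_le_cons _ <| Multiset.cons_le_cons _ <| Multiset.le_cons_self _ _

end Switch

lemma Switch.IsActive.four_le_sum_count {C : Type*} [Fintype C] {G : SimpleGraph V}
    {χ : Sym2 V → C} {g : Switch V} (h : g.IsActive G χ) :
    4 ≤ ∑ c, ((g.better χ c).map χ).count c := by
  have hcard : (g.removed.map χ).card = (g.added.map χ).card := by
    simp only [Multiset.card_map, card_removed, card_added]
  simpa only [count_map_better, Multiset.card_map, card_removed] using
    Nat.succ_le_of_lt (card_lt_sum_max_count hcard h.map_ne)

lemma exists_isTour_pathEdges_le [Finite V] {l : List V} (hl : l.Nodup) :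
    ∃ E, IsTour E ∧ pathEdges l ≤ E := by
  cases nonempty_fintype V
  refine ⟨_, ⟨l ++ (Finset.univ \ l.toFinset).toList, ⟨?_, fun v => ?_⟩, rfl⟩, ?_⟩
  · rw [List.nodup_append']
    exact ⟨hl, Finset.nodup_toList _, fun v hv hv' => by simp_all⟩
  · by_cases hv : v ∈ l <;> simp [hv]
  · exact ((Multiset.le_add_right _ _).trans (pathEdges_add_le _ _)).trans
      (pathEdges_le_cycleEdges _)

lemma sum_removed_le_pathEdges (L : List (Switch V)) :
    (L.map Switch.removed).sum ≤ pathEdges (L.flatMap Switch.verts) := by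
  induction L with
  | nil => simp
  | cons g L ih =>
    rw [List.map_cons, List.sum_cons, List.flatMap_cons]
    exact (add_le_add g.removed_le_pathEdges_verts ih).trans (pathEdges_add_le _ _)

lemma exists_isTour_sum_removed_le [Finite V] {𝓖 : Finset (Switch V)}
    (hnodup : ∀ g ∈ 𝓖, g.verts.Nodup)
    (hdisj : (𝓖 : Set (Switch V)).PairwiseDisjoint fun g => g.verts.toFinset) :
    ∃ E, IsTour E ∧ ∑ g ∈ 𝓖, g.removed ≤ E := by
  have hflat : (𝓖.toList.flatMap Switch.verts).Nodup := by
    refine List.nodup_flatMap.2 ⟨by simpa using hnodup, ?_⟩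
    refine (Finset.nodup_toList 𝓖).pairwise_of_forall_ne fun g hg h hh hgh => ?_
    exact List.disjoint_toFinset_iff_disjoint.1 <|
      hdisj (Finset.mem_toList.1 hg) (Finset.mem_toList.1 hh) hgh
  obtain ⟨E, hE, hle⟩ := exists_isTour_pathEdges_le hflat
  exact ⟨E, hE, by simpa using (sum_removed_le_pathEdges 𝓖.toList).trans hle⟩

lemma IsTour.sum_switch {R : Multiset (Sym2 V)} {𝓖 : Finset (Switch V)}
    {f : Switch V → Multiset (Sym2 V)} (hE : IsTour (R + ∑ g ∈ 𝓖, g.removed))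
    (hvx : ∀ g ∈ 𝓖, g.v ≠ g.x) (hf : ∀ g ∈ 𝓖, f g = g.removed ∨ f g = g.added) :
    IsTour (R + ∑ g ∈ 𝓖, f g) := by
  induction 𝓖 using Finset.induction_on generalizing R with
  | empty => simpa using hE
  | insert g 𝓖 hg ih =>
    rw [Finset.forall_mem_insert] at hvx hf
    rw [Finset.sum_insert hg, ← add_assoc] at hE ⊢
    refine ih ?_ hvx.2 hf.2
    rcases hf.1 with h | h
    · rwa [h]
    · rw [add_right_comm] at hE ⊢
      exact h ▸ hE.relocate hvx.1

/-- Every Hamilton cycle of `G` has colour bias at most `b`, with denominators cleared. -/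
def TourBiasLE {C : Type*} [Fintype V] [Fintype C] (G : SimpleGraph V) (χ : Sym2 V → C)
    (b : ℕ) : Prop :=
  ∀ E, IsTour E → (∀ e ∈ E, e ∈ G.edgeSet) →
    ∀ c, Fintype.card C * (E.map χ).count c ≤ Fintype.card V + Fintype.card C * b

section Counting

variable {C : Type*} [Fintype V] [Fintype C] {G : SimpleGraph V} {χ : Sym2 V → C} {b : ℕ}
  {𝓖 : Finset (Switch V)}

lemma TourBiasLE.card_le_of_le_tour [Nonempty C] {R : Multiset (Sym2 V)} (hb : TourBiasLE G χ b)
    (hact : ∀ g ∈ 𝓖, g.IsActive G χ) (hE : IsTour (R + ∑ g ∈ 𝓖, g.removed))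
    (hR : ∀ e ∈ R, e ∈ G.edgeSet) : 𝓖.card ≤ Fintype.card C * b := by
  have hcard : R.card + 3 * 𝓖.card = Fintype.card V := by
    rw [← hE.card_eq]
    simp [mul_comm]
  have hcolour (c : C) : Fintype.card C *
      ((R.map χ).count c + ∑ g ∈ 𝓖, ((g.better χ c).map χ).count c) ≤
        Fintype.card V + Fintype.card C * b := by
    have htour := hE.sum_switch (fun g hg => (hact g hg).v_ne_x)
      fun g _ => g.better_eq_or χ c
    refine le_trans (le_of_eq ?_) (hb _ htour (fun e he => ?_) c)
    · rw [Multiset.map_add, Multiset.count_add, ← Multiset.coe_mapAddMonoidHom, map_sum,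
        Multiset.count_sum']
    · rcases Multiset.mem_add.1 he with he | he
      · exact hR e he
      · obtain ⟨g, hg, he⟩ := Multiset.mem_sum.1 he
        rcases g.better_eq_or χ c with h | h
        · exact (hact g hg).removed_subset e (h ▸ he)
        · exact (hact g hg).added_subset e (h ▸ he)
  have hgain : 4 * 𝓖.card ≤ ∑ c, ∑ g ∈ 𝓖, ((g.better χ c).map χ).count c := by
    rw [Finset.sum_comm, mul_comm, ← smul_eq_mul]
    exact Finset.card_nsmul_le_sum _ _ _ fun g hg => (hact g hg).four_le_sum_count
  have hRcount : ∑ c, (R.map χ).count c = R.card := by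
    rw [Multiset.sum_count_eq_card (by simp), Multiset.card_map]
  have hsum := Finset.sum_le_sum fun c (_ : c ∈ Finset.univ) => hcolour c
  rw [← Finset.mul_sum, Finset.sum_add_distrib, hRcount, Finset.sum_const, Finset.card_univ,
    smul_eq_mul] at hsum
  have := Nat.le_of_mul_le_mul_left hsum Fintype.card_pos
  omega

lemma TourBiasLE.card_le_of_minDegree [Nonempty C] (hb : TourBiasLE G χ b)
    (hact : ∀ g ∈ 𝓖, g.IsActive G χ)
    (hdisj : (𝓖 : Set (Switch V)).PairwiseDisjoint fun g => g.verts.toFinset)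
    (hdeg : Fintype.card V + 3 * 𝓖.card ≤ 2 * G.minDegree) : 𝓖.card ≤ Fintype.card C * b := by
  obtain ⟨E₀, hE₀, hle₀⟩ := exists_isTour_sum_removed_le (fun g hg => (hact g hg).nodup) hdisj
  have hremoved : ∀ e ∈ ∑ g ∈ 𝓖, g.removed, e ∈ G.edgeSet := fun e he =>
    let ⟨g, hg, he⟩ := Multiset.mem_sum.1 he
    (hact g hg).removed_subset e he
  obtain ⟨E, hE, hle, hEG⟩ := hE₀.exists_forall_mem_edgeSet hle₀ hremoved
    (by simpa [mul_comm] using hdeg)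
  obtain ⟨R, rfl⟩ := Multiset.le_iff_exists_add.1 hle
  exact hb.card_le_of_le_tour hact (add_comm _ R ▸ hE) fun e he =>
    hEG e (Multiset.mem_add.2 (Or.inr he))

lemma TourBiasLE.card_le [Nonempty C] (hb : TourBiasLE G χ b)
    (hdeg : Fintype.card V + 3 * (Fintype.card C * b + 1) ≤ 2 * G.minDegree)
    (hact : ∀ g ∈ 𝓖, g.IsActive G χ)
    (hdisj : (𝓖 : Set (Switch V)).PairwiseDisjoint fun g => g.verts.toFinset) :
    𝓖.card ≤ Fintype.card C * b := by
  by_contra! hlt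
  obtain ⟨𝓗, hsub, hcard⟩ := Finset.exists_subset_card_eq (Nat.succ_le_of_lt hlt)
  have := hb.card_le_of_minDegree (fun g hg => hact g (hsub hg))
    (hdisj.subset (Finset.coe_subset.2 hsub)) (hcard ▸ hdeg)
  omega

end Counting

/-! ### Rigid colourings -/

lemma exists_card_le_forall_not_disjoint {α : Type*} {A : Set α} {f : α → Finset V} {k m : ℕ}
    (hne : ∀ a ∈ A, (f a).Nonempty) (hk : ∀ a ∈ A, (f a).card ≤ k)
    (hm : ∀ s : Finset α, ↑s ⊆ A → (s : Set α).PairwiseDisjoint f → s.card ≤ m) :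
    ∃ S : Finset V, S.card ≤ k * m ∧ ∀ a ∈ A, ¬Disjoint (f a) S := by
  obtain ⟨_, ⟨s, ⟨hsA, hdisj⟩, rfl⟩, hmax⟩ : ∃ j, IsGreatest
      (Finset.card '' {s : Finset α | ↑s ⊆ A ∧ (s : Set α).PairwiseDisjoint f}) j :=
    BddAbove.exists_isGreatest_of_nonempty
      ⟨m, Set.forall_mem_image.2 fun s hs => hm s hs.1 hs.2⟩
      (Set.Nonempty.image _ ⟨∅, by simp⟩)
  refine ⟨s.biUnion f, ?_, fun a ha hdis => ?_⟩
  · rw [mul_comm]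
    exact (Finset.card_biUnion_le_card_mul s f k fun a ha => hk a (hsA ha)).trans
      (Nat.mul_le_mul_right k (hm s hsA hdisj))
  · rw [Finset.disjoint_biUnion_right] at hdis
    have has : a ∉ s := fun has => (hne a ha).ne_empty (disjoint_self.1 (hdis a has))
    have hcard := hmax ⟨insert a s, ⟨by simpa [Set.insert_subset_iff] using ⟨ha, hsA⟩, by
      rw [Finset.coe_insert]
      exact hdisj.insert fun b hb _ => hdis b hb⟩, rfl⟩
    rw [Finset.card_insert_of_notMem has] at hcard
    omega

/-- The edge `xy` joins two neighbours of `v` and avoids the exceptional set `S`. -/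
structure IsLinkEdge (G : SimpleGraph V) (S : Finset V) (v x y : V) : Prop where
  adj_left : G.Adj v x
  adj_right : G.Adj v y
  adj : G.Adj x y
  left_notMem : x ∉ S
  right_notMem : y ∉ S

lemma IsLinkEdge.symm {G : SimpleGraph V} {S : Finset V} {v x y : V} (h : IsLinkEdge G S v x y) :
    IsLinkEdge G S v y x :=
  ⟨h.adj_right, h.adj_left, h.adj.symm, h.right_notMem, h.left_notMem⟩

lemma IsLinkEdge.rotate {G : SimpleGraph V} {S : Finset V} {v x y : V} (h : IsLinkEdge G S v x y)
    (hv : v ∉ S) : IsLinkEdge G S y v x :=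
  ⟨h.adj_right.symm, h.adj.symm, h.adj_left, hv, h.left_notMem⟩

lemma exists_isLinkEdge [Fintype V] {G : SimpleGraph V} {S : Finset V}
    (hdeg : Fintype.card V + S.card < 2 * G.minDegree) (v : V) : ∃ x y, IsLinkEdge G S v x y := by
  have hdegree (w : V) : G.minDegree ≤ (G.neighborFinset w).card := by
    simpa using G.minDegree_le_degree w
  obtain ⟨x, hx, hxS⟩ := Finset.exists_mem_notMem_of_card_lt_card
    (s := S) (t := G.neighborFinset v) (by
      have := hdegree v; have := (G.neighborFinset v).card_le_univ; omega)
  obtain ⟨y, hy, hyS⟩ := Finset.exists_mem_notMem_of_card_lt_card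
    (s := S) (t := G.neighborFinset v ∩ G.neighborFinset x) (by
      have := Finset.card_union_add_card_inter (G.neighborFinset v) (G.neighborFinset x)
      have := (G.neighborFinset v ∪ G.neighborFinset x).card_le_univ
      have := hdegree v; have := hdegree x; omega)
  simp only [Finset.mem_inter, mem_neighborFinset] at hx hy
  exact ⟨x, y, hx, hy.1, hy.2, hxS, hyS⟩

section Structure

variable {C : Type*} {G : SimpleGraph V} {χ : Sym2 V → C} {S : Finset V} {v x y a b : V}

/-- Whichever four vertices are forbidden, the neighbourhood of every vertex still contains an edge
that avoids them and `S`. -/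
def HasRichLinks (G : SimpleGraph V) (S : Finset V) : Prop :=
  ∀ (v : V) (T : Finset V), T.card ≤ 4 → ∃ x y, IsLinkEdge G S v x y ∧ x ∉ T ∧ y ∉ T

lemma hasRichLinks_of_minDegree [Fintype V]
    (hdeg : Fintype.card V + S.card + 4 < 2 * G.minDegree) : HasRichLinks G S := by
  intro v T hT
  obtain ⟨x, y, h⟩ := exists_isLinkEdge (G := G) (S := S ∪ T)
    (by have := Finset.card_union_le S T; omega) v
  obtain ⟨hxS, hxT⟩ := not_or.1 (Finset.mem_union.not.1 h.left_notMem)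
  obtain ⟨hyS, hyT⟩ := not_or.1 (Finset.mem_union.not.1 h.right_notMem)
  exact ⟨x, y, ⟨h.adj_left, h.adj_right, h.adj, hxS, hyS⟩, hxT, hyT⟩

/-- The set `S` meets every active switch. -/
def Blocks (S : Finset V) (G : SimpleGraph V) (χ : Sym2 V → C) : Prop :=
  ∀ g : Switch V, g.IsActive G χ → ∃ w ∈ g.verts, w ∈ S

/-- The colours of the two edges that join `v` to `x` and `y`. -/
def spokes (χ : Sym2 V → C) (v x y : V) : Multiset C := {χ s(v, x), χ s(v, y)}

lemma Blocks.spokes_eq_of_ne (hS : Blocks S G χ) (hv : v ∉ S) (h : IsLinkEdge G S v x y)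
    (h' : IsLinkEdge G S v a b) (hxa : x ≠ a) (hxb : x ≠ b) (hya : y ≠ a) (hyb : y ≠ b) :
    χ s(a, b) ::ₘ spokes χ v x y = χ s(x, y) ::ₘ spokes χ v a b := by
  by_contra hne
  obtain ⟨w, hw, hwS⟩ := hS ⟨v, x, y, a, b⟩
    { nodup := by
        simp [Switch.verts, h.adj_left.ne', h.adj_right.ne, h.adj.ne, h'.adj_left.ne,
          h'.adj_right.ne, h'.adj.ne, hxa, hxb, hya, hyb]
      removed_subset := by
        simp [Switch.removed, h.adj_left.symm, h.adj_right, h'.adj]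
      added_subset := by
        simp [Switch.added, h.adj, h'.adj_left.symm, h'.adj_right]
      map_ne := by
        simpa [Switch.removed, Switch.added, spokes, Sym2.eq_swap (b := v),
          ← Multiset.singleton_add, add_assoc, add_comm, add_left_comm] using hne }
  simp only [Switch.verts, List.mem_cons, List.not_mem_nil, or_false] at hw
  rcases hw with rfl | rfl | rfl | rfl | rfl
  exacts [h.left_notMem hwS, hv hwS, h.right_notMem hwS, h'.left_notMem hwS, h'.right_notMem hwS]

lemma Blocks.spokes_eq (hS : Blocks S G χ) (hG : HasRichLinks G S) (hv : v ∉ S)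
    (h : IsLinkEdge G S v x y) (h' : IsLinkEdge G S v a b) :
    χ s(a, b) ::ₘ spokes χ v x y = χ s(x, y) ::ₘ spokes χ v a b := by
  obtain ⟨z, w, hzw, hz, hw⟩ := hG v {x, y, a, b} Finset.card_le_four
  simp only [Finset.mem_insert, Finset.mem_singleton, not_or, ← ne_eq] at hz hw
  obtain ⟨hzx, hzy, hza, hzb⟩ := hz
  obtain ⟨hwx, hwy, hwa, hwb⟩ := hw
  rw [← Multiset.cons_inj_right (χ s(z, w))]
  calc χ s(z, w) ::ₘ χ s(a, b) ::ₘ spokes χ v x y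
    _ = χ s(a, b) ::ₘ χ s(z, w) ::ₘ spokes χ v x y := Multiset.cons_swap ..
    _ = χ s(a, b) ::ₘ χ s(x, y) ::ₘ spokes χ v z w := by
      rw [hS.spokes_eq_of_ne hv h hzw hzx.symm hwx.symm hzy.symm hwy.symm]
    _ = χ s(x, y) ::ₘ χ s(a, b) ::ₘ spokes χ v z w := Multiset.cons_swap ..
    _ = χ s(x, y) ::ₘ χ s(z, w) ::ₘ spokes χ v a b := by
      rw [hS.spokes_eq_of_ne hv hzw h' hza hzb hwa hwb]
    _ = χ s(z, w) ::ₘ χ s(x, y) ::ₘ spokes χ v a b := Multiset.cons_swap ..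

/-- All edges in the neighbourhood of `v` that avoid `S` have colour `c`. -/
def IsMonoLink (G : SimpleGraph V) (χ : Sym2 V → C) (S : Finset V) (v : V) (c : C) : Prop :=
  ∀ x y, IsLinkEdge G S v x y → χ s(x, y) = c

lemma Blocks.isMonoLink_or_spokes_eq (hS : Blocks S G χ) (hG : HasRichLinks G S) (hv : v ∉ S) :
    (∃ c, IsMonoLink G χ S v c) ∨
      ∃ t, ∀ x y, IsLinkEdge G S v x y → spokes χ v x y = {χ s(x, y), t} := by
  rw [or_iff_not_imp_left]
  intro hmono
  obtain ⟨x, y, hxy, -, -⟩ := hG v ∅ (by simp)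
  obtain ⟨a, b, hab, hne⟩ : ∃ a b, IsLinkEdge G S v a b ∧ χ s(a, b) ≠ χ s(x, y) := by
    by_contra! hall
    exact hmono ⟨_, hall⟩
  have hmem : χ s(x, y) ∈ spokes χ v x y := by
    have hmem : χ s(x, y) ∈ χ s(a, b) ::ₘ spokes χ v x y :=
      hS.spokes_eq hG hv hxy hab ▸ Multiset.mem_cons_self _ _
    exact (Multiset.mem_cons.1 hmem).resolve_left hne.symm
  obtain ⟨t, ht⟩ : ∃ t, spokes χ v x y = {χ s(x, y), t} := by
    rw [spokes, Multiset.insert_eq_cons, Multiset.mem_cons, Multiset.mem_singleton] at hmem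
    rcases hmem with h | h
    · exact ⟨_, by rw [spokes, h]⟩
    · exact ⟨_, by rw [spokes, h, Multiset.pair_comm]⟩
  refine ⟨t, fun p q hpq => ?_⟩
  have heq := hS.spokes_eq hG hv hxy hpq
  rw [ht, Multiset.insert_eq_cons, Multiset.cons_swap, Multiset.cons_inj_right] at heq
  exact heq.symm

lemma Blocks.exists_isMonoLink (hS : Blocks S G χ) (hG : HasRichLinks G S) (hv : v ∉ S) :
    ∃ u c, IsMonoLink G χ S u c := by
  rcases hS.isMonoLink_or_spokes_eq hG hv with ⟨c, hc⟩ | ⟨t, ht⟩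
  · exact ⟨v, c, hc⟩
  by_cases hmono : IsMonoLink G χ S v t
  · exact ⟨v, t, hmono⟩
  obtain ⟨x, y, hxy, hne, hvx⟩ : ∃ x y, IsLinkEdge G S v x y ∧ χ s(x, y) ≠ t ∧ χ s(v, x) = t := by
    simp only [IsMonoLink, not_forall] at hmono
    obtain ⟨x, y, hxy, hne⟩ := hmono
    have hmem : t ∈ spokes χ v x y := by simp [ht x y hxy]
    simp only [spokes, Multiset.insert_eq_cons, Multiset.mem_cons, Multiset.mem_singleton] at hmem
    rcases hmem with h | h
    · exact ⟨x, y, hxy, hne, h.symm⟩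
    · exact ⟨y, x, hxy.symm, by rwa [Sym2.eq_swap], h.symm⟩
  have hvy : χ s(v, y) = χ s(x, y) := by
    have heq := ht x y hxy
    rw [spokes, hvx, Multiset.pair_comm] at heq
    simpa using heq
  rcases hS.isMonoLink_or_spokes_eq hG hxy.right_notMem with ⟨c, hc⟩ | ⟨t', ht'⟩
  · exact ⟨y, c, hc⟩
  have hmem : t ∈ spokes χ y v x := by simp [ht' v x (hxy.rotate hv), hvx]
  simp [spokes, Sym2.eq_swap (a := y), hvy, hne.symm] at hmem

end Structure

lemma minDegree_le_card [Fintype V] (G : SimpleGraph V) : G.minDegree ≤ Fintype.card V := by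
  rcases isEmpty_or_nonempty V with hV | hV
  · simp
  · exact G.minDegree_lt_card.le

lemma TourBiasLE.exists_isMonoLink {C : Type*} [Fintype V] [Fintype C] {G : SimpleGraph V}
    {χ : Sym2 V → C} {b : ℕ} (hb : TourBiasLE G χ b)
    (hdeg : Fintype.card V + 5 * (Fintype.card C * b) + 4 < 2 * G.minDegree) :
    ∃ S : Finset V, S.card ≤ 5 * (Fintype.card C * b) ∧ ∃ u c, IsMonoLink G χ S u c := by
  have hδ := minDegree_le_card G
  have hV : Nonempty V := Fintype.card_pos_iff.1 (by omega)
  have hC : Nonempty C := hV.map fun v => χ s(v, v)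
  obtain ⟨S, hcard, hS⟩ := exists_card_le_forall_not_disjoint
    (A := {g : Switch V | g.IsActive G χ}) (f := fun g => g.verts.toFinset) (k := 5)
    (fun g _ => ⟨g.v, by simp [Switch.verts]⟩) (fun g _ => List.toFinset_card_le _)
    fun 𝓖 => hb.card_le (by omega)
  have hblocks : Blocks S G χ := fun g hg => by
    simpa [Finset.not_disjoint_iff] using hS g hg
  obtain ⟨v, -, hv⟩ := Finset.exists_mem_notMem_of_card_lt_card
    (s := S) (t := Finset.univ) (by rw [Finset.card_univ]; omega)
  exact ⟨S, hcard, hblocks.exists_isMonoLink (hasRichLinks_of_minDegree (by omega)) hv⟩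

lemma MatchingIn.card_le {G : SimpleGraph V} {M : Finset (Sym2 V)} {S : Finset V}
    (hM : MatchingIn M G) (hS : ∀ e ∈ M, ∃ w ∈ e, w ∈ S) : M.card ≤ S.card := by
  refine Finset.card_le_card_of_forall_subsingleton (fun e w => w ∈ e)
    (fun e he => (hS e he).imp fun _ => And.symm) ?_
  rintro w - e ⟨he, hwe⟩ e' ⟨he', hwe'⟩
  by_contra hne
  exact hM.2 e he e' he' hne w ⟨hwe, hwe'⟩

lemma IsMonoLink.card_matching_le {C : Type*} {G : SimpleGraph V} {χ : Sym2 V → C} {S : Finset V}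
    {u : V} {c : C} (hmono : IsMonoLink G χ S u c) {M : Finset (Sym2 V)} (hM : MatchingIn M G)
    (hu : ∀ e ∈ M, ∀ w ∈ e, G.Adj u w) (hc : ∀ e ∈ M, χ e ≠ c) : M.card ≤ S.card := by
  refine hM.card_le fun e he => ?_
  by_contra! hS
  induction e with | _ x y
  exact hc _ he <| hmono x y
    ⟨hu _ he x (Sym2.mem_mk_left x y), hu _ he y (Sym2.mem_mk_right x y), hM.1 _ he,
      hS x (Sym2.mem_mk_left x y), hS y (Sym2.mem_mk_right x y)⟩

/-! ### Tours as Hamilton cycles -/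

lemma coe_edges_eq_pathEdges {G : SimpleGraph V} {u v : V} (p : G.Walk u v) :
    (p.edges : Multiset (Sym2 V)) = pathEdges p.support := by
  rw [Walk.edges_eq_zipWith_support, pathEdges]

lemma exists_walk_of_pathEdges {G : SimpleGraph V} {l : List V} {a b : V} (ha : a ∈ l.head?)
    (hb : b ∈ l.getLast?) (hG : ∀ e ∈ pathEdges l, e ∈ G.edgeSet) :
    ∃ p : G.Walk a b, p.support = l := by
  have hne : l ≠ [] := by rintro rfl; simp at ha
  have hchain : l.IsChain G.Adj := forall_mem_pathEdges.1 hG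
  obtain rfl : l.head hne = a := (List.head_eq_iff_head?_eq_some hne).2 ha
  obtain rfl : l.getLast hne = b := (List.getLast_eq_iff_getLast?_eq_some hne).2 hb
  exact ⟨Walk.ofSupport l hne hchain, Walk.support_ofSupport ..⟩

theorem IsTour.exists_isHamiltonianCycle [Fintype V] [DecidableEq V] {G : SimpleGraph V}
    {E : Multiset (Sym2 V)} (hE : IsTour E) (hG : ∀ e ∈ E, e ∈ G.edgeSet)
    (hcard : 3 ≤ Fintype.card V) :
    ∃ (u : V) (p : G.Walk u u), p.IsHamiltonianCycle ∧ (p.edges : Multiset (Sym2 V)) = E := by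
  obtain ⟨l, hl, rfl⟩ := hE
  rw [← hl.length_eq] at hcard
  obtain ⟨a, l, rfl⟩ := List.exists_cons_of_length_pos (by omega : 0 < l.length)
  obtain ⟨p, hp⟩ := exists_walk_of_pathEdges (a := a) (b := a) rfl List.getLast?_concat hG
  have hperm : p.support.tail.Perm (a :: l) := by
    simp [hp]
  have hlen : p.length = (a :: l).length := by
    simpa [hp] using p.length_support.symm
  have hnil : ¬p.Nil := by
    rw [Walk.not_nil_iff_lt_length]; omega
  have hpath : p.tail.IsPath := by
    rw [Walk.isPath_def, p.support_tail_of_not_nil hnil]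
    exact hperm.nodup_iff.2 hl.1
  refine ⟨a, p, ⟨(p.isCycle_iff_isPath_tail_and_le_length).2 ⟨hpath, by omega⟩,
    hpath.isHamiltonian_of_mem fun v => ?_⟩, by rw [coe_edges_eq_pathEdges, hp]; rfl⟩
  rw [p.support_tail_of_not_nil hnil]
  exact hperm.mem_iff.2 (hl.2 v)

section ColourBias

variable {C : Type*} [Fintype V] [DecidableEq V] [Fintype C] [DecidableEq C] {G : SimpleGraph V}
  {χ : Sym2 V → C} {b : ℕ}

lemma tourBiasLE_of_forall_isHamiltonianCycle (hcard : 3 ≤ Fintype.card V)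
    (hH : ∀ (u : V) (H : G.Walk u u), H.IsHamiltonianCycle → ∀ c : C,
      ((H.edges.filter fun e => decide (χ e = c)).length : ℝ) ≤
        (Fintype.card V : ℝ) / Fintype.card C + b) : TourBiasLE G χ b := by
  intro E hE hEG c
  obtain ⟨u, p, hp, rfl⟩ := hE.exists_isHamiltonianCycle hEG hcard
  have hC : (0 : ℝ) < Fintype.card C := by
    exact_mod_cast Fintype.card_pos_iff.2 ⟨c⟩
  have hle := mul_le_mul_of_nonneg_left (hH u p hp c) hC.le
  rw [mul_add, mul_div_cancel₀ _ hC.ne'] at hle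
  simp only [Multiset.count_map, Multiset.filter_coe, Multiset.coe_card, eq_comm (a := c)]
  exact_mod_cast hle

theorem stmt_11_general
    (hdeg : Fintype.card V + 5 * (Fintype.card C * b) + 4 < 2 * G.minDegree)
    (hH : ∀ (u : V) (H : G.Walk u u), H.IsHamiltonianCycle → ∀ c : C,
      ((H.edges.filter fun e => decide (χ e = c)).length : ℝ) ≤
        (Fintype.card V : ℝ) / Fintype.card C + b) :
    ∃ U : Finset V, G.minDegree ≤ U.card ∧ ∃ c : C, ∀ M : Finset (Sym2 V), MatchingIn M G →
      (∀ e ∈ M, ∀ w ∈ e, w ∈ U) → (∀ e ∈ M, χ e ≠ c) → M.card ≤ 5 * (Fintype.card C * b) := by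
  have hδ := minDegree_le_card G
  obtain ⟨S, hS, u, c, hmono⟩ :=
    (tourBiasLE_of_forall_isHamiltonianCycle (by omega) hH).exists_isMonoLink hdeg
  refine ⟨G.neighborFinset u, by simpa using G.minDegree_le_degree u, c, fun M hM hMU hMc => ?_⟩
  exact (hmono.card_matching_le hM (by simpa using hMU) hMc).trans hS

end ColourBias

lemma add_lt_two_mul_of_bias_le {r b n δ : ℕ} (hr : 2 ≤ r) (hb : 1 ≤ b)
    (hbn : (b : ℝ) ≤ 2⁻¹ ^ 10 * ((r : ℝ))⁻¹ ^ 2 * n) (hδ : ((r : ℝ) + 1) / (2 * r) * n ≤ δ) :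
    n + 5 * (r * b) + 4 < 2 * δ := by
  have hr₀ : (0 : ℝ) < r := by positivity
  have hn : 2 ^ 10 * (r * b : ℝ) ≤ n / r := by
    rw [le_div_iff₀ hr₀]
    calc _ = 2 ^ 10 * r ^ 2 * (b : ℝ) := by ring
      _ ≤ 2 ^ 10 * r ^ 2 * (2⁻¹ ^ 10 * (r : ℝ)⁻¹ ^ 2 * n) := by gcongr
      _ = n := by field_simp
  have hdouble : n + n / r = 2 * (((r : ℝ) + 1) / (2 * r) * n) := by field_simp
  have hrb : (2 * 1 : ℝ) ≤ r * b := by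
    gcongr <;> norm_cast
  have : (n + 5 * (r * b) + 4 : ℝ) < 2 * δ := by linarith
  exact_mod_cast this

lemma le_minDegree_of_forall_le_ncard [Fintype V] [Nonempty V] {G : SimpleGraph V} {δ : ℝ}
    (h : ∀ v, δ ≤ ((G.neighborSet v).ncard : ℝ)) : δ ≤ G.minDegree := by
  obtain ⟨v, hv⟩ := G.exists_minimal_degree_vertex
  rw [hv, ← G.card_neighborFinset_eq_degree, ← Set.ncard_coe_finset, coe_neighborFinset]
  exact h v

/-- structural proposition. Let `r ≥ 2`. For all sufficiently large
`n`, all integers `1 ≤ b ≤ 2⁻¹⁰ r⁻² n`, every graph `G` on `n` vertices with minimum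
degree at least `(r+1)n/(2r)` and every `r`-colouring `χ` of its edges: if every
Hamilton cycle of `G` has colour bias at most `b` (each colour appears on at most
`n/r + b` edges), then there are `U ⊆ V(G)` with `|U| ≥ (r+1)n/(2r)` and a colour `c*`
such that every matching in `G[U]` avoiding colour `c*` has fewer than `2⁹ r b` edges. -/
theorem stmt_11 (r : ℕ) (hr : 2 ≤ r) :
    ∃ N : ℕ, ∀ n ≥ N, ∀ b : ℕ, 1 ≤ b → (b : ℝ) ≤ 2⁻¹ ^ 10 * ((r : ℝ))⁻¹ ^ 2 * n →
      ∀ G : SimpleGraph (Fin n),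
        (∀ v : Fin n, ((r : ℝ) + 1) / (2 * r) * n ≤ ((G.neighborSet v).ncard : ℝ)) →
        ∀ χ : Sym2 (Fin n) → Fin r,
          (∀ (u : Fin n) (H : G.Walk u u), H.IsHamiltonianCycle →
            ∀ c : Fin r,
              ((H.edges.filter fun e => decide (χ e = c)).length : ℝ) ≤ (n : ℝ) / r + b) →
          ∃ U : Finset (Fin n), ((r : ℝ) + 1) * n / (2 * r) ≤ (U.card : ℝ) ∧
            ∃ cstar : Fin r,
              ∀ M : Finset (Sym2 (Fin n)), MatchingIn M G →
                (∀ e ∈ M, ∀ w ∈ e, w ∈ U) → (∀ e ∈ M, χ e ≠ cstar) →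
                M.card < 2 ^ 9 * r * b := by
  refine ⟨1, fun n hn b hb hbn G hdeg χ hH => ?_⟩
  have : NeZero n := ⟨by omega⟩
  have hδ := le_minDegree_of_forall_le_ncard hdeg
  obtain ⟨U, hU, c, hM⟩ := stmt_11_general (G := G) (χ := χ) (b := b)
    (by simpa using add_lt_two_mul_of_bias_le hr hb hbn hδ) (by simpa using hH)
  rw [div_mul_eq_mul_div] at hδ
  refine ⟨U, hδ.trans (by exact_mod_cast hU), c, fun M hMG hMU hMc => ?_⟩
  have hrb : 0 < r * b := by positivity
  have := hM M hMG hMU hMc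
  rw [Fintype.card_fin] at this
  rw [mul_assoc]
  omega
end
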